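/- arXiv:1906.04882 — 3 statements merged into one kernel-verified Lean document; each statement's English description precedes it below -/
import Mathlib

section
/- Let ψ (in V) and ψ' (in V') be isomorphic linear representations of a poset P over a field k. Suppose V = U₁ ⊕ … ⊕ Uₙ is a decomposition of ψ into indecomposable subrepresentations, i.e. ψ(p) = ⊕ᵢ (ψ(p) ∩ Uᵢ) for all p ∈ P and each restricted representation p ↦ ψ(p) ∩ Uᵢ on Uᵢ is indecomposable; similarly suppose V' = U'₁ ⊕ … ⊕ U'ₙ' is a decomposition of ψ' into indecomposable subrepresentations. Then n = n' and there is a permutation σ of {1,…,n} such that for every i the restriction of ψ to Uᵢ is isomorphic to the restriction of ψ' to U'_{σ(i)}. -/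
/-- The restriction of a poset representation `ψ` in `V` to a subspace `U`:
the representation `p ↦ ψ(p) ∩ U` viewed inside `U`. -/
def restrictRep {k V P : Type*} [Field k] [AddCommGroup V] [Module k V]
    (ψ : P → Submodule k V) (U : Submodule k V) : P → Submodule k ↥U :=
  fun p => (ψ p).comap U.subtype

/-- Isomorphism of poset representations: a linear isomorphism of the ambient spaces
carrying each subspace onto the corresponding one. -/
def RepIso {k W W' P : Type*} [Field k] [AddCommGroup W] [Module k W]
    [AddCommGroup W'] [Module k W']
    (χ : P → Submodule k W) (χ' : P → Submodule k W') : Prop :=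
  ∃ g : W ≃ₗ[k] W', ∀ p, (χ p).map (g : W →ₗ[k] W') = χ' p

/-- Indecomposability of a poset representation: the ambient space is nonzero and every
direct sum decomposition compatible with all the subspaces is trivial. -/
def IsIndecompRep {k W P : Type*} [Field k] [AddCommGroup W] [Module k W]
    (χ : P → Submodule k W) : Prop :=
  Nontrivial W ∧ ∀ W' W'' : Submodule k W, IsCompl W' W'' →
    (∀ p, χ p = (χ p ⊓ W') ⊔ (χ p ⊓ W'')) → W' = ⊥ ∨ W'' = ⊥

/-- The Drazin inverse of an algebraic element of an algebra over a field. -/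
theorem IsIntegral.exists_drazin_inverse {k R : Type*} [Field k] [Ring R] [Algebra k R] {a : R}
    (ha : IsIntegral k a) :
    ∃ (y : R) (n : ℕ), Commute y a ∧ y * a * y = y ∧ a ^ n * (y * a) = a ^ n := by
  obtain ⟨q, hq, hdvd⟩ := Polynomial.exists_eq_pow_rootMultiplicity_mul_and_not_dvd
    (minpoly k a) (minpoly.ne_zero ha) 0
  set n := Polynomial.rootMultiplicity 0 (minpoly k a)
  simp only [map_zero, sub_zero] at hq hdvd
  have hcop : IsCoprime ((Polynomial.X : Polynomial k) ^ (n + 1)) q :=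
    ((Polynomial.irreducible_X.coprime_iff_not_dvd).2 hdvd).pow_left
  obtain ⟨u, v, huv⟩ := hcop
  have hmin : Polynomial.aeval a (Polynomial.X ^ n * q) = 0 := hq ▸ minpoly.aeval k a
  have hXnq (w : Polynomial k) : Polynomial.aeval a (w * (Polynomial.X ^ n * q)) = 0 := by
    rw [map_mul, hmin, mul_zero]
  refine ⟨Polynomial.aeval a (u * Polynomial.X ^ n * (u * Polynomial.X ^ (n + 1))), n, ?_, ?_, ?_⟩
  · have := Commute.all (u * Polynomial.X ^ n * (u * Polynomial.X ^ (n + 1))) Polynomial.X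
    simpa using this.map (Polynomial.aeval (R := k) a)
  · nth_rewrite 2 [← Polynomial.aeval_X (R := k) a]
    rw [← map_mul, ← map_mul, ← sub_eq_zero, ← map_sub]
    convert hXnq (-(u * (u * Polynomial.X ^ (n + 1)) * v * (1 + u * Polynomial.X ^ (n + 1))))
      using 2
    linear_combination (-(u * Polynomial.X ^ n) * (u * Polynomial.X ^ (n + 1)) *
      (1 + u * Polynomial.X ^ (n + 1))) * (- huv)
  · nth_rewrite 1 [← Polynomial.aeval_X (R := k) a]
    nth_rewrite 3 [← Polynomial.aeval_X (R := k) a]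
    nth_rewrite 4 [← Polynomial.aeval_X (R := k) a]
    rw [← map_pow, ← map_mul, ← map_mul, ← sub_eq_zero, ← map_sub]
    convert hXnq (-(v * (1 + u * Polynomial.X ^ (n + 1)))) using 2
    linear_combination (-(Polynomial.X ^ n) * (1 + u * Polynomial.X ^ (n + 1))) * (- huv)

theorem exists_isUnit_of_isUnit_sum {A ι : Type*} [Ring A] [Nontrivial A]
    (hA : ∀ a : A, IsNilpotent a ∨ IsUnit a) (s : Finset ι) (c : ι → A)
    (hs : IsUnit (∑ i ∈ s, c i)) : ∃ i ∈ s, IsUnit (c i) := by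
  classical
  induction s using Finset.induction_on with
  | empty => simp at hs
  | insert i s hi ih =>
    rw [Finset.sum_insert hi] at hs
    obtain ⟨u, hu⟩ := hs
    have hsum : ↑u⁻¹ * c i + ↑u⁻¹ * ∑ j ∈ s, c j = 1 := by rw [← mul_add, ← hu, Units.inv_mul]
    rcases hA (↑u⁻¹ * c i) with h | h
    · have h' := h.isUnit_one_sub
      rw [← hsum, add_sub_cancel_left, Units.isUnit_units_mul] at h'
      obtain ⟨j, hj, hj'⟩ := ih h'
      exact ⟨j, Finset.mem_insert_of_mem hj, hj'⟩
    · exact ⟨i, Finset.mem_insert_self i s, (Units.isUnit_units_mul u⁻¹ _).1 h⟩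

/-- A nonzero idempotent `e` is primitive if `0` and `e` are the only idempotents of `eRe`. -/
structure IsPrimitiveIdempotent {R : Type*} [Ring R] (e : R) : Prop where
  idem : IsIdempotentElem e
  ne_zero : e ≠ 0
  eq_zero_or_eq : ∀ y, IsIdempotentElem y → e * y = y → y * e = y → y = 0 ∨ y = e

namespace IsPrimitiveIdempotent

variable {R : Type*} [Ring R] {e : R}

theorem map {S F : Type*} [Ring S] [EquivLike F R S] [RingEquivClass F R S]
    (he : IsPrimitiveIdempotent e) (φ : F) : IsPrimitiveIdempotent (φ e) where
  idem := he.idem.map φ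
  ne_zero := by simpa using he.ne_zero
  eq_zero_or_eq y hy h₁ h₂ := by
    obtain ⟨y, rfl⟩ := EquivLike.surjective φ y
    have hinj := EquivLike.injective φ
    simp only [IsIdempotentElem, ← map_mul, hinj.eq_iff, map_eq_zero_iff φ hinj] at *
    exact he.eq_zero_or_eq y hy h₁ h₂

/-- Primitivity of an idempotent only depends on the right ideal it generates. -/
theorem of_mul_eq {g : R} (he : IsPrimitiveIdempotent e) (h₁ : e * g = g) (h₂ : g * e = e) :
    IsPrimitiveIdempotent g where
  idem := by
    unfold IsIdempotentElem
    nth_rewrite 2 [← h₁]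
    rw [← mul_assoc, h₂, h₁]
  ne_zero := by
    rintro rfl
    exact he.ne_zero (by simpa using h₂.symm)
  eq_zero_or_eq y hy hgy hyg := by
    have hey : e * y = y := by rw [← hgy, ← mul_assoc, h₁]
    have hyeg : y * e * g = y := by rw [mul_assoc, h₁, hyg]
    rcases he.eq_zero_or_eq (y * e)
      (by rw [IsIdempotentElem, mul_assoc, ← mul_assoc e, hey, ← mul_assoc, hy.eq])
      (by rw [← mul_assoc, hey]) (by rw [mul_assoc, he.idem.eq]) with h | h
    · left; rw [← hyeg, h, zero_mul]
    · right; rw [← hyeg, h, h₁]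

theorem isNilpotent_or_isUnit {k : Type*} [Field k] [Algebra k R] [Algebra.IsIntegral k R]
    (he : IsPrimitiveIdempotent e) (a : he.idem.Corner) : IsNilpotent a ∨ IsUnit a := by
  obtain ⟨hea, hae⟩ := (Subsemigroup.mem_corner_iff he.idem).1 a.2
  obtain ⟨y, n, hcomm, hyay, han⟩ :=
    (Algebra.IsIntegral.isIntegral (R := k) a.1).exists_drazin_inverse
  have hey : e * y = y := by rw [← hyay, hcomm.eq, ← mul_assoc, ← mul_assoc, hea]
  have hye : y * e = y := by
    have hyya : y * (y * a.1) = y := by rw [hcomm.eq, ← mul_assoc, hyay]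
    rw [← hyya, mul_assoc, mul_assoc, hae]
  rcases he.eq_zero_or_eq (y * a.1) (by rw [IsIdempotentElem, ← mul_assoc, hyay])
    (by rw [← mul_assoc, hey])
    (by rw [mul_assoc, hae]) with h | h
  · left
    have hpow (m : ℕ) : (a ^ (m + 1)).1 = a.1 ^ (m + 1) := by
      induction m with
      | zero => rw [zero_add, pow_one, pow_one]
      | succ m ih =>
        rw [pow_succ, pow_succ a.1, ← ih]
        rfl
    refine ⟨n + 1, Subtype.ext ?_⟩
    rw [hpow, pow_succ, ← han, h, mul_zero, zero_mul]
    rfl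
  · right
    refine ⟨⟨a, ⟨y, (Subsemigroup.mem_corner_iff he.idem).2 ⟨hey, hye⟩⟩, ?_, ?_⟩, rfl⟩
    · exact Subtype.ext (hcomm.eq.symm.trans h)
    · exact Subtype.ext h

/-- If a primitive idempotent `e` is the projection of `1 = ∑ f j`, some `e * f j * e` is
invertible in `eRe`. -/
theorem exists_mul_mul_eq {k κ : Type*} [Field k] [Algebra k R] [Algebra.IsIntegral k R]
    [Fintype κ] (he : IsPrimitiveIdempotent e) {f : κ → R} (hf : ∑ j, f j = 1) :
    ∃ j x, e * x = x ∧ x * e = x ∧ x * f j * e = e ∧ e * f j * x = e := by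
  let c (j : κ) : he.idem.Corner := ⟨e * f j * e, f j, rfl⟩
  have hc : ∑ j, c j = 1 := by
    have hsum (s : Finset κ) : (∑ j ∈ s, c j).1 = e * (∑ j ∈ s, f j) * e := by
      classical
      induction s using Finset.induction_on with
      | empty => simp; rfl
      | insert i s hi ih =>
        rw [Finset.sum_insert hi, Finset.sum_insert hi, mul_add, add_mul, ← ih]
        rfl
    refine Subtype.ext ?_
    rw [hsum, hf, mul_one, he.idem.eq]
    rfl
  have : Nontrivial he.idem.Corner := ⟨1, 0, fun h => he.ne_zero (congrArg Subtype.val h)⟩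
  obtain ⟨j, -, u, hu⟩ := exists_isUnit_of_isUnit_sum (he.isNilpotent_or_isUnit (k := k))
    Finset.univ c (hc ▸ isUnit_one)
  obtain ⟨hex, hxe⟩ := (Subsemigroup.mem_corner_iff he.idem).1 (↑u⁻¹ : he.idem.Corner).2
  have h₁ : (↑u⁻¹ : he.idem.Corner).1 * (e * f j * e) = e := by
    have := u.inv_mul
    rw [hu] at this
    exact congrArg Subtype.val this
  have h₂ : (e * f j * e) * (↑u⁻¹ : he.idem.Corner).1 = e := by
    have := u.mul_inv
    rw [hu] at this
    exact congrArg Subtype.val this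
  refine ⟨j, (↑u⁻¹ : he.idem.Corner).1, hex, hxe, ?_, ?_⟩
  · rw [← mul_assoc, ← mul_assoc, hxe] at h₁
    exact h₁
  · rw [mul_assoc (e * f j), hex] at h₂
    exact h₂

end IsPrimitiveIdempotent

/-- Exchanging the member `g i` of a complete orthogonal family of idempotents for `f`. -/
theorem CompleteOrthogonalIdempotents.exchange {R ι : Type*} [Ring R] [Fintype ι] [DecidableEq ι]
    {g : ι → R} (hg : CompleteOrthogonalIdempotents g) (i : ι) {f x : R}
    (hgx : g i * x = x) (hxg : x * g i = x) (hxfg : x * f * g i = g i) (hgfx : g i * f * x = g i) :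
    CompleteOrthogonalIdempotents
      (Function.update (fun l => g l * (1 - f * x)) i (f * x)) := by
  have hxfx : x * f * x = x := by
    nth_rewrite 2 [← hgx]
    rw [← mul_assoc, hxfg, hgx]
  have hidem : f * x * (f * x) = f * x := by rw [mul_assoc, ← mul_assoc x, hxfx]
  have hother {l : ι} (hl : l ≠ i) (z : R) : (1 - f * x) * (g l * z) = g l * z := by
    have hxgl : x * g l = 0 := by
      rw [← hxg, mul_assoc, hg.ortho hl.symm, mul_zero]
    rw [sub_mul, one_mul, mul_assoc f, ← mul_assoc x, hxgl, zero_mul, mul_zero, sub_zero]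
  refine ⟨⟨fun l => ?_, fun l m hlm => ?_⟩, ?_⟩
  · rcases eq_or_ne l i with rfl | hl
    · simpa [IsIdempotentElem] using hidem
    · simp only [Function.update_of_ne hl, IsIdempotentElem]
      rw [mul_assoc, hother hl, ← mul_assoc, (hg.idem l).eq]
  · rcases eq_or_ne l i with rfl | hl
    · simp only [Function.update_self, Function.update_of_ne hlm.symm]
      have := hother hlm.symm (1 - f * x)
      rwa [sub_mul, one_mul, sub_eq_self] at this
    · rcases eq_or_ne m i with rfl | hm
      · simp only [Function.update_self, Function.update_of_ne hl]
        rw [mul_assoc, sub_mul, hidem, one_mul, sub_self, mul_zero]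
      · simp only [Function.update_of_ne hl, Function.update_of_ne hm]
        rw [mul_assoc, hother hm, ← mul_assoc, hg.ortho hlm, zero_mul]
  · rw [Finset.sum_update_of_mem (Finset.mem_univ i), ← Finset.sum_mul]
    have hsum : ∑ l ∈ Finset.univ \ {i}, g l = 1 - g i := by
      rw [← hg.complete, ← Finset.sum_sdiff (Finset.subset_univ {i}), Finset.sum_singleton,
        add_sub_cancel_right]
    rw [hsum, sub_mul, one_mul, mul_sub, mul_one, ← mul_assoc, hgfx]
    abel

/-- **Krull–Remak–Schmidt** for complete orthogonal families of primitive idempotents. -/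
theorem CompleteOrthogonalIdempotents.exists_equiv {k R ι κ : Type*} [Field k] [Ring R]
    [Algebra k R] [Algebra.IsIntegral k R] [Fintype ι] [Fintype κ]
    {e : ι → R} (he : CompleteOrthogonalIdempotents e) (he' : ∀ i, IsPrimitiveIdempotent (e i))
    {f : κ → R} (hf : CompleteOrthogonalIdempotents f) (hf' : ∀ j, IsPrimitiveIdempotent (f j)) :
    ∃ σ : ι ≃ κ, ∀ i, ∃ a b, a * b = e i ∧ b * a = f (σ i) := by
  classical
  have key (s : Finset ι) : ∃ (g : ι → R) (σ : ι → κ), CompleteOrthogonalIdempotents g ∧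
      Set.InjOn σ s ∧
      (∀ i ∈ s, g i * f (σ i) = f (σ i) ∧ f (σ i) * g i = g i ∧
        ∃ a b, a * b = e i ∧ b * a = f (σ i)) ∧
      ∀ i ∉ s, e i * g i = g i ∧ g i * e i = e i := by
    induction s using Finset.induction_on with
    | empty =>
      exact ⟨e, fun i => ((he' i).exists_mul_mul_eq (k := k) hf.complete).choose, he, by simp,
        by simp, fun i _ => ⟨(he.idem i).eq, (he.idem i).eq⟩⟩
    | insert i s hi ih =>
      obtain ⟨g, σ, hg, hσ, hs, hsc⟩ := ih
      obtain ⟨heg, hge⟩ := hsc i hi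
      have hgi := (he' i).of_mul_eq heg hge
      obtain ⟨j, x, hgx, hxg, hxfg, hgfx⟩ := hgi.exists_mul_mul_eq (k := k) hf.complete
      have hj : ∀ l ∈ s, σ l ≠ j := by
        rintro l hl rfl
        have hil : i ≠ l := by
          rintro rfl
          exact hi hl
        apply hgi.ne_zero
        rw [← hxfg, ← (hs l hl).1, ← hxg, mul_assoc x, ← mul_assoc (g i), hg.ortho hil, zero_mul,
          mul_zero, zero_mul]
      have hxfx : x * f j * x = x := by
        nth_rewrite 2 [← hgx]
        rw [← mul_assoc, hxfg, hgx]
      have hfxf : f j * x * f j = f j := by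
        refine ((hf' j).eq_zero_or_eq (f j * x * f j) ?_ ?_ ?_).resolve_left fun h => ?_
        · rw [IsIdempotentElem, mul_assoc, ← mul_assoc (f j) (f j * x), ← mul_assoc (f j) (f j),
            (hf.idem j).eq, ← mul_assoc, mul_assoc (f j) x (f j * x), ← mul_assoc x, hxfx]
        · rw [← mul_assoc, ← mul_assoc, (hf.idem j).eq]
        · rw [mul_assoc, (hf.idem j).eq]
        · apply hgi.ne_zero
          rw [← hxfg, ← hxfx, mul_assoc x (f j) x, mul_assoc x (f j * x), h, mul_zero, zero_mul]
      have hne {l : ι} (hl : l ∈ s) : l ≠ i := fun h => hi (h ▸ hl)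
      refine ⟨_, Function.update σ i j, hg.exchange i hgx hxg hxfg hgfx, ?_, ?_, ?_⟩
      · rw [Finset.coe_insert, Set.injOn_insert (by simpa using hi)]
        have hcongr : Set.EqOn (Function.update σ i j) σ s := fun l hl =>
          Function.update_of_ne (hne hl) _ _
        refine ⟨hσ.congr hcongr.symm, ?_⟩
        rw [hcongr.image_eq, Function.update_self]
        rintro ⟨l, hl, hlj⟩
        exact hj l hl hlj
      · intro l hl
        rcases eq_or_ne l i with rfl | hli
        · simp only [Function.update_self]
          refine ⟨hfxf, by rw [← mul_assoc, (hf.idem j).eq], x * f j, f j * e l, ?_, ?_⟩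
          · rw [← mul_assoc, mul_assoc x, (hf.idem j).eq, ← hge, ← mul_assoc, hxfg]
          · have hex : e l * x = x := by rw [← hgx, ← mul_assoc, heg]
            rw [mul_assoc, ← mul_assoc (e l), hex, ← mul_assoc, hfxf]
        · have hls := Finset.mem_of_mem_insert_of_ne hl hli
          simp only [Function.update_of_ne hli]
          obtain ⟨h₁, h₂, h₃⟩ := hs l hls
          refine ⟨?_, by rw [← mul_assoc, h₂], h₃⟩
          have hxf : x * f (σ l) = 0 := by
            rw [← h₁, ← hxg, mul_assoc, ← mul_assoc (g i), hg.ortho hli.symm, zero_mul, mul_zero]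
          rw [mul_assoc, sub_mul, mul_assoc (f j), hxf, mul_zero, sub_zero, one_mul, h₁]
      · intro l hl
        rw [Finset.mem_insert, not_or] at hl
        simp only [Function.update_of_ne hl.1]
        obtain ⟨h₁, h₂⟩ := hsc l hl.2
        refine ⟨by rw [← mul_assoc, h₁], ?_⟩
        have hxe : x * e l = 0 := by
          rw [← h₂, ← hxg, mul_assoc, ← mul_assoc (g i), hg.ortho (Ne.symm hl.1), zero_mul,
            mul_zero]
        rw [mul_assoc, sub_mul, mul_assoc (f j), hxe, mul_zero, sub_zero, one_mul, h₂]
  obtain ⟨g, σ, hg, hσ, hs, -⟩ := key Finset.univ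
  have hsurj : Function.Surjective σ := by
    intro j
    by_contra! hj
    apply (hf' j).ne_zero
    rw [← mul_one (f j), ← hg.complete, Finset.mul_sum]
    refine Finset.sum_eq_zero fun i _ => ?_
    rw [← (hs i (Finset.mem_univ i)).2.1, ← mul_assoc, hf.ortho (hj i).symm, zero_mul]
  refine ⟨Equiv.ofBijective σ ⟨fun a b h => hσ (by simp) (by simp) h, hsurj⟩, fun i => ?_⟩
  exact (hs i (Finset.mem_univ i)).2.2

section PosetRepresentation

variable {k V V' P : Type*} [Field k] [AddCommGroup V] [Module k V] [AddCommGroup V'] [Module k V']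

/-- The endomorphism algebra of a poset representation. -/
def repEnd (ψ : P → Submodule k V) : Subalgebra k (Module.End k V) where
  carrier := {f | ∀ p, ∀ x ∈ ψ p, f x ∈ ψ p}
  mul_mem' hf hg p x hx := hf p _ (hg p x hx)
  add_mem' hf hg p x hx := add_mem (hf p x hx) (hg p x hx)
  algebraMap_mem' c p _ hx := (ψ p).smul_mem c hx

/-- An isomorphism of representations induces an isomorphism of endomorphism rings. -/
def repEndEquiv {ψ : P → Submodule k V} {ψ' : P → Submodule k V'} (φ : V ≃ₗ[k] V')
    (hφ : ∀ p, (ψ p).map (φ : V →ₗ[k] V') = ψ' p) : repEnd ψ' ≃+* repEnd ψ where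
  toFun t := ⟨φ.symm.conjRingEquiv t.1, fun p x hx => by
    have := t.2 p (φ x) (hφ p ▸ Submodule.mem_map_of_mem hx)
    rw [← hφ, Submodule.mem_map_equiv] at this
    simpa using this⟩
  invFun t := ⟨φ.conjRingEquiv t.1, fun p x hx => by
    rw [← hφ, Submodule.mem_map_equiv] at hx ⊢
    simpa using t.2 p _ hx⟩
  left_inv t := by ext; simp
  right_inv t := by ext; simp
  map_mul' s t := Subtype.ext (map_mul _ _ _)
  map_add' s t := Subtype.ext (map_add _ _ _)

theorem apply_repEndEquiv_apply {ψ : P → Submodule k V} {ψ' : P → Submodule k V'} (φ : V ≃ₗ[k] V')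
    (hφ : ∀ p, (ψ p).map (φ : V →ₗ[k] V') = ψ' p) (t : repEnd ψ') (x : V) :
    φ ((repEndEquiv φ hφ t).1 x) = t.1 (φ x) := by
  simp [repEndEquiv]

/-- An idempotent endomorphism with indecomposable image is primitive. -/
theorem IsIndecompRep.isPrimitiveIdempotent {ψ : P → Submodule k V} {U : Submodule k V}
    (hU : IsIndecompRep (restrictRep ψ U)) {e : repEnd ψ} (heU : ∀ x, e.1 x ∈ U)
    (he : ∀ x ∈ U, e.1 x = x) : IsPrimitiveIdempotent e where
  idem := Subtype.ext (LinearMap.ext fun x => he _ (heU x))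
  ne_zero := by
    rintro rfl
    obtain ⟨x, hx⟩ := (nontrivial_iff_exists_ne (0 : U)).1 hU.1
    exact hx (Subtype.ext (he x x.2).symm)
  eq_zero_or_eq y hy hey hye := by
    replace hy (x : V) : y.1 (y.1 x) = y.1 x := congrArg (fun t : repEnd ψ => t.1 x) hy
    replace hey (x : V) : e.1 (y.1 x) = y.1 x := congrArg (fun t : repEnd ψ => t.1 x) hey
    replace hye (x : V) : y.1 (e.1 x) = y.1 x := congrArg (fun t : repEnd ψ => t.1 x) hye
    have hyU (x : V) (_ : x ∈ U) : y.1 x ∈ U := hey x ▸ heU _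
    let z : U →ₗ[k] U := y.1.restrict hyU
    have hz : IsIdempotentElem z := LinearMap.ext fun x => Subtype.ext (hy x)
    have hzz (x : U) : z (z x) = z x := LinearMap.congr_fun hz x
    have hdec (p : P) : restrictRep ψ U p =
        restrictRep ψ U p ⊓ z.range ⊔ restrictRep ψ U p ⊓ z.ker := by
      refine le_antisymm (fun x hx => ?_) (sup_le inf_le_left inf_le_left)
      have hzx : z x ∈ restrictRep ψ U p := y.2 p x hx
      rw [← add_sub_cancel (z x) x]
      exact Submodule.add_mem_sup ⟨hzx, x, rfl⟩
        ⟨sub_mem hx hzx, by rw [SetLike.mem_coe, LinearMap.mem_ker, map_sub, hzz, sub_self]⟩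
    rcases hU.2 z.range z.ker (LinearMap.IsIdempotentElem.isCompl hz) hdec with h | h
    · left
      refine Subtype.ext (LinearMap.ext fun x => ?_)
      have := LinearMap.congr_fun (LinearMap.range_eq_bot.1 h) ⟨e.1 x, heU x⟩
      exact (hye x).symm.trans (congrArg Subtype.val this)
    · right
      refine Subtype.ext (LinearMap.ext fun x => ?_)
      have := LinearMap.ker_eq_bot.1 h (hzz ⟨e.1 x, heU x⟩)
      exact (hye x).symm.trans (congrArg Subtype.val this)

theorem exists_completeOrthogonalIdempotents_repEnd {ι : Type*} [Fintype ι] [DecidableEq ι]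
    {ψ : P → Submodule k V} {U : ι → Submodule k V} (hU : DirectSum.IsInternal U)
    (hdec : ∀ p, ψ p = ⨆ i, ψ p ⊓ U i) :
    ∃ e : ι → repEnd ψ, CompleteOrthogonalIdempotents e ∧
      ∀ i, (∀ x, (e i).1 x ∈ U i) ∧ ∀ x ∈ U i, (e i).1 x = x := by
  let π (i : ι) : Module.End k V := (U i).subtype ∘ₗ DirectSum.component k ι (fun i => U i) i ∘ₗ
    (LinearEquiv.ofBijective (DirectSum.coeLinearMap U) hU).symm
  have hπU (i : ι) (x : V) : π i x ∈ U i := Subtype.prop _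
  have hπ (i : ι) (x : V) (hx : x ∈ U i) : π i x = x :=
    congrArg Subtype.val (hU.ofBijective_coeLinearMap_of_mem hx)
  have hπ' {i j : ι} (hij : i ≠ j) (x : V) (hx : x ∈ U i) : π j x = 0 :=
    congrArg Subtype.val (hU.ofBijective_coeLinearMap_of_mem_ne hij hx)
  have hπψ (i : ι) : π i ∈ repEnd ψ := by
    intro p x hx
    rw [hdec p] at hx
    induction hx using Submodule.iSup_induction' with
    | mem j x hx =>
      rcases eq_or_ne j i with rfl | hji
      · rw [hπ j x hx.2]
        exact hx.1
      · rw [hπ' hji x hx.2]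
        exact zero_mem _
    | zero => rw [map_zero]; exact zero_mem _
    | add x y _ _ hx hy => rw [map_add]; exact add_mem hx hy
  refine ⟨fun i => ⟨π i, hπψ i⟩, ⟨⟨fun i => ?_, fun i j hij => ?_⟩, ?_⟩,
    fun i => ⟨hπU i, hπ i⟩⟩
  · exact Subtype.ext (LinearMap.ext fun x => hπ i _ (hπU i x))
  · exact Subtype.ext (LinearMap.ext fun x => hπ' hij.symm _ (hπU j x))
  · refine Subtype.ext (LinearMap.ext fun x => ?_)
    rw [AddSubmonoidClass.coe_finsetSum, LinearMap.sum_apply]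
    have hx : x ∈ ⨆ i, U i := hU.submodule_iSup_eq_top ▸ Submodule.mem_top
    change ∑ i, π i x = x
    induction hx using Submodule.iSup_induction' with
    | mem j x hx =>
      rw [Finset.sum_eq_single j (fun i _ hij => hπ' hij.symm x hx) (by simp), hπ j x hx]
    | zero => simp
    | add x y _ _ hx hy => simp only [map_add, Finset.sum_add_distrib, hx, hy]

/-- Equivalent idempotents have isomorphic images. -/
theorem RepIso.of_mul_eq {ψ : P → Submodule k V} {ψ' : P → Submodule k V'} (φ : V ≃ₗ[k] V')
    (hφ : ∀ p, (ψ p).map (φ : V →ₗ[k] V') = ψ' p) {U : Submodule k V} {U' : Submodule k V'}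
    {e : repEnd ψ} (heU : ∀ x, e.1 x ∈ U) (he : ∀ x ∈ U, e.1 x = x)
    {f : repEnd ψ'} (hfU : ∀ x, f.1 x ∈ U') (hf : ∀ x ∈ U', f.1 x = x)
    {a b : repEnd ψ} (hab : a * b = e) (hba : b * a = repEndEquiv φ hφ f) :
    RepIso (restrictRep ψ U) (restrictRep ψ' U') := by
  replace hab (x : V) : a.1 (b.1 x) = e.1 x := congrArg (fun t : repEnd ψ => t.1 x) hab
  replace hba (x : V) : φ (b.1 (a.1 x)) = f.1 (φ x) := by
    rw [← apply_repEndEquiv_apply φ hφ, ← hba]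
    rfl
  have hb (x : U) : φ (b.1 x) ∈ U' := by
    rw [← he x x.2, ← hab, hba]
    exact hfU _
  have hba' (y : U') : φ (b.1 (a.1 (φ.symm y))) = y := by
    rw [hba, φ.apply_symm_apply, hf y y.2]
  have ha (y : U') : a.1 (φ.symm y) ∈ U := by
    rw [← hba' y, φ.symm_apply_apply, hab]
    exact heU _
  refine ⟨LinearEquiv.ofLinearMap ((φ.toLinearMap ∘ₗ b.1 ∘ₗ U.subtype).codRestrict U' hb)
    ((a.1 ∘ₗ φ.symm.toLinearMap ∘ₗ U'.subtype).codRestrict U ha)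
    (LinearMap.ext fun y => Subtype.ext ?_) (LinearMap.ext fun x => Subtype.ext ?_), fun p => ?_⟩
  · exact hba' y
  · exact (congrArg a.1 (φ.symm_apply_apply _)).trans ((hab x).trans (he x x.2))
  · ext y
    rw [Submodule.mem_map_equiv]
    change a.1 (φ.symm y) ∈ ψ p ↔ y.1 ∈ ψ' p
    refine ⟨fun h => ?_, fun h => a.2 p _ ?_⟩
    · rw [← hba' y, ← hφ]
      exact Submodule.mem_map_of_mem (b.2 p _ h)
    · rwa [← hφ, Submodule.mem_map_equiv] at h

end PosetRepresentation

/-- (Krull–Remak–Schmidt for poset representations.)  If `ψ` and `ψ'`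
are isomorphic representations of a poset `P` over a field `k`, decomposed into
indecomposable subrepresentations along internal direct sum decompositions
`V = U₁ ⊕ ⋯ ⊕ Uₙ` and `V' = U'₁ ⊕ ⋯ ⊕ U'ₙ'`, then `n = n'` and after a permutation the
restricted representations are pairwise isomorphic. -/
theorem krull_remak_schmidt_for_poset_representations
    {k V V' P : Type*} [Field k]
    [AddCommGroup V] [Module k V] [FiniteDimensional k V]
    [AddCommGroup V'] [Module k V'] [FiniteDimensional k V']
    [PartialOrder P]
    (ψ : P → Submodule k V) (hψ : Monotone ψ)
    (ψ' : P → Submodule k V') (hψ' : Monotone ψ')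
    (hiso : RepIso ψ ψ')
    {n n' : ℕ} (U : Fin n → Submodule k V) (U' : Fin n' → Submodule k V')
    (hU : DirectSum.IsInternal U) (hU' : DirectSum.IsInternal U')
    (hdec : ∀ p, ψ p = ⨆ i, ψ p ⊓ U i)
    (hdec' : ∀ p, ψ' p = ⨆ i, ψ' p ⊓ U' i)
    (hind : ∀ i, IsIndecompRep (restrictRep ψ (U i)))
    (hind' : ∀ i, IsIndecompRep (restrictRep ψ' (U' i))) :
    n = n' ∧ ∃ σ : Fin n ≃ Fin n', ∀ i,
      RepIso (restrictRep ψ (U i)) (restrictRep ψ' (U' (σ i))) := by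
  obtain ⟨φ, hφ⟩ := hiso
  obtain ⟨e, he, heU⟩ := exists_completeOrthogonalIdempotents_repEnd hU hdec
  obtain ⟨f, hf, hfU⟩ := exists_completeOrthogonalIdempotents_repEnd hU' hdec'
  obtain ⟨σ, hσ⟩ := he.exists_equiv (k := k)
    (fun i => (hind i).isPrimitiveIdempotent (heU i).1 (heU i).2)
    (hf.map (repEndEquiv φ hφ).toRingHom)
    (fun j => ((hind' j).isPrimitiveIdempotent (hfU j).1 (hfU j).2).map (repEndEquiv φ hφ))
  refine ⟨by simpa using Fintype.card_congr σ, σ, fun i => ?_⟩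
  obtain ⟨a, b, hab, hba⟩ := hσ i
  exact .of_mul_eq φ hφ (heU i).1 (heU i).2 (hfU (σ i)).1 (hfU (σ i)).2 hab hba
end

section
/- Let k be a field, X a finite-dimensional k-vector space, and γ : X → X a linear map such that both γ and γ − id_X are invertible. Consider the sextuple Δ_γ in X × X × X given by I₁ = {(x, −γx, 0) : x ∈ X}, C₁ = X×X×0, I₂ = {(0, x, x) : x ∈ X}, C₂ = 0×X×X, I₃ = {(x, 0, x) : x ∈ X}, C₃ = X×0×X. Then Δ_γ is isomorphic to the framed sextuple S_η with η = γ ∘ (γ − id_X)⁻¹, i.e. there is a linear automorphism of X × X × X carrying each of the six subspaces of Δ_γ onto the corresponding subspace of S_η. -/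
section Sextuples

variable {k X : Type*} [Field k] [AddCommGroup X] [Module k X]

/-- `I₁ = {(x, −γx, 0)}` of the sextuple `Δ_γ`. -/
def dI1 (γ : X →ₗ[k] X) : Submodule k (X × X × X) :=
  LinearMap.range ((LinearMap.id : X →ₗ[k] X).prod ((-γ).prod (0 : X →ₗ[k] X)))

/-- `C₁ = X × X × 0` of the sextuple `Δ_γ`. -/
def dC1 : Submodule k (X × X × X) :=
  (⊤ : Submodule k X).prod ((⊤ : Submodule k X).prod (⊥ : Submodule k X))

/-- `I₂ = {(0, x, x)}` of the sextuple `Δ_γ`. -/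
def dI2 : Submodule k (X × X × X) :=
  LinearMap.range ((0 : X →ₗ[k] X).prod
    ((LinearMap.id : X →ₗ[k] X).prod (LinearMap.id : X →ₗ[k] X)))

/-- `C₂ = 0 × X × X` of the sextuple `Δ_γ`. -/
def dC2 : Submodule k (X × X × X) :=
  (⊥ : Submodule k X).prod ((⊤ : Submodule k X).prod (⊤ : Submodule k X))

/-- `I₃ = {(x, 0, x)}` of the sextuple `Δ_γ`. -/
def dI3 : Submodule k (X × X × X) :=
  LinearMap.range ((LinearMap.id : X →ₗ[k] X).prod
    ((0 : X →ₗ[k] X).prod (LinearMap.id : X →ₗ[k] X)))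

/-- `C₃ = X × 0 × X` of the sextuple `Δ_γ`. -/
def dC3 : Submodule k (X × X × X) :=
  (⊤ : Submodule k X).prod ((⊥ : Submodule k X).prod (⊤ : Submodule k X))

/-- `I₁ = X × 0 × 0` of the framed sextuple `S_η`. -/
def sI1 : Submodule k (X × X × X) :=
  (⊤ : Submodule k X).prod ((⊥ : Submodule k X).prod (⊥ : Submodule k X))

/-- `C₁ = X × X × 0` of the framed sextuple `S_η`. -/
def sC1 : Submodule k (X × X × X) :=
  (⊤ : Submodule k X).prod ((⊤ : Submodule k X).prod (⊥ : Submodule k X))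

/-- `I₂ = 0 × 0 × X` of the framed sextuple `S_η`. -/
def sI2 : Submodule k (X × X × X) :=
  (⊥ : Submodule k X).prod ((⊥ : Submodule k X).prod (⊤ : Submodule k X))

/-- `C₂ = 0 × X × X` of the framed sextuple `S_η`. -/
def sC2 : Submodule k (X × X × X) :=
  (⊥ : Submodule k X).prod ((⊤ : Submodule k X).prod (⊤ : Submodule k X))

/-- `I₃ = {(−ηx, x, −x)}` of the framed sextuple `S_η`. -/
def sI3 (η : X →ₗ[k] X) : Submodule k (X × X × X) :=
  LinearMap.range ((-η).prod
    ((LinearMap.id : X →ₗ[k] X).prod (-(LinearMap.id : X →ₗ[k] X))))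

/-- `C₃ = {(y − ηx, x − y, −x)}` of the framed sextuple `S_η`. -/
def sC3 (η : X →ₗ[k] X) : Submodule k (X × X × X) :=
  LinearMap.range ((LinearMap.snd k X X - η ∘ₗ LinearMap.fst k X X).prod
    ((LinearMap.fst k X X - LinearMap.snd k X X).prod (-(LinearMap.fst k X X))))

end Sextuples

/-- The linear map `(a, b, c) ↦ (−γa, γa + b − c, c − γc)`. -/
def framingMap {k X : Type*} [Field k] [AddCommGroup X] [Module k X] (γ : X →ₗ[k] X) :
    (X × X × X) →ₗ[k] (X × X × X) where
  toFun v := (-γ v.1, γ v.1 + v.2.1 - v.2.2, v.2.2 - γ v.2.2)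
  map_add' u v := by
    ext <;> simp <;> abel
  map_smul' r v := by
    ext <;> simp [smul_add, smul_sub]

theorem framingMap_bijective {k X : Type*} [Field k] [AddCommGroup X] [Module k X]
    {γ : X →ₗ[k] X} (hγ : Function.Bijective γ)
    (hγ1 : Function.Bijective (γ - (LinearMap.id : X →ₗ[k] X))) :
    Function.Bijective (framingMap γ) := by
  constructor
  · refine (injective_iff_map_eq_zero _).2 ?_
    rintro ⟨a, b, c⟩ h
    simp only [framingMap, LinearMap.coe_mk, AddHom.coe_mk, Prod.mk_eq_zero, neg_eq_zero] at h
    obtain ⟨ha, hb, hc⟩ := h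
    have hc0 : c = 0 := (injective_iff_map_eq_zero _).1 hγ1.injective c (by
      simpa [sub_eq_zero] using (sub_eq_zero.1 hc).symm)
    have ha0 : a = 0 := (injective_iff_map_eq_zero _).1 hγ.injective a ha
    subst hc0 ha0
    simpa using hb
  · rintro ⟨p, q, r⟩
    obtain ⟨a, ha⟩ := hγ.surjective (-p)
    obtain ⟨c, hc⟩ := hγ1.surjective (-r)
    have hc' : c - γ c = r := by
      rw [← neg_sub, ← neg_eq_iff_eq_neg.2 hc]
      simp
    exact ⟨(a, q + p + c, c), by simp [framingMap, ha, hc', ← add_assoc, add_comm q]⟩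

/-- Let `γ : X → X` be linear with `γ` and `γ − id` invertible.  Then
the continuous-type normal-form sextuple `Δ_γ` is isomorphic to the framed sextuple
`S_η` where `η = γ ∘ (γ − id)⁻¹` (expressed by `η ∘ (γ − id) = γ`): some linear
automorphism of `X × X × X` carries each of the six subspaces of `Δ_γ` onto the
corresponding subspace of `S_η`. -/
theorem delta_gamma_isomorphic_to_framed_sextuple
    {k X : Type*} [Field k] [AddCommGroup X] [Module k X] [FiniteDimensional k X]
    (γ : X →ₗ[k] X) (hγ : Function.Bijective γ)
    (hγ1 : Function.Bijective (γ - (LinearMap.id : X →ₗ[k] X)))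
    (η : X →ₗ[k] X) (hη : η ∘ₗ (γ - (LinearMap.id : X →ₗ[k] X)) = γ) :
    ∃ g : (X × X × X) ≃ₗ[k] (X × X × X),
      (dI1 γ).map g.toLinearMap = sI1 ∧
      (dC1 : Submodule k (X × X × X)).map g.toLinearMap = sC1 ∧
      (dI2 : Submodule k (X × X × X)).map g.toLinearMap = sI2 ∧
      (dC2 : Submodule k (X × X × X)).map g.toLinearMap = sC2 ∧
      (dI3 : Submodule k (X × X × X)).map g.toLinearMap = sI3 η ∧
      (dC3 : Submodule k (X × X × X)).map g.toLinearMap = sC3 η := by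
  have hη' (x : X) : η (γ x) - η x = γ x := by
    simpa using LinearMap.congr_fun hη x
  have hδ (z : X) : ∃ x, γ x - x = z := by
    simpa using hγ1.surjective z
  refine ⟨LinearEquiv.ofBijective _ (framingMap_bijective hγ hγ1), ?_, ?_, ?_, ?_, ?_, ?_⟩ <;>
    refine le_antisymm (Submodule.map_le_iff_le_comap.2 ?_) ?_
  · rintro _ ⟨x, rfl⟩
    simp [sI1, framingMap]
  · rintro ⟨p, q, r⟩ h
    obtain ⟨x, hx⟩ := hγ.surjective (-p)
    obtain ⟨rfl, rfl⟩ : q = 0 ∧ r = 0 := by simpa [sI1] using h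
    exact ⟨_, ⟨x, rfl⟩, by simp [framingMap, hx]⟩
  · rintro ⟨a, b, c⟩ h
    obtain rfl : c = 0 := by simpa [dC1] using h
    simp [sC1, framingMap]
  · rintro ⟨p, q, r⟩ h
    obtain ⟨x, hx⟩ := hγ.surjective (-p)
    obtain rfl : r = 0 := by simpa [sC1] using h
    exact ⟨(x, q + p, 0), by simp [dC1], by simp [framingMap, hx]⟩
  · rintro _ ⟨x, rfl⟩
    simp [sI2, framingMap]
  · rintro ⟨p, q, r⟩ h
    obtain ⟨x, hx⟩ := hδ (-r)
    obtain ⟨rfl, rfl⟩ : p = 0 ∧ q = 0 := by simpa [sI2] using h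
    exact ⟨_, ⟨x, rfl⟩, by simp [framingMap, ← neg_sub (γ x) x, hx]⟩
  · rintro ⟨a, b, c⟩ h
    obtain rfl : a = 0 := by simpa [dC2] using h
    simp [sC2, framingMap]
  · rintro ⟨p, q, r⟩ h
    obtain ⟨x, hx⟩ := hδ (-r)
    obtain rfl : p = 0 := by simpa [sC2] using h
    exact ⟨(0, q + x, x), by simp [dC2], by simp [framingMap, ← neg_sub (γ x) x, hx]⟩
  · rintro _ ⟨x, rfl⟩
    exact ⟨γ x - x, by simp [framingMap, hη']⟩
  · rintro _ ⟨z, rfl⟩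
    obtain ⟨x, rfl⟩ := hδ z
    exact ⟨_, ⟨x, rfl⟩, by simp [framingMap, hη']⟩
  · rintro ⟨a, b, c⟩ h
    obtain rfl : b = 0 := by simpa [dC3] using h
    refine ⟨(γ c - c, γ c - γ a), ?_⟩
    simp [framingMap, hη']
  · rintro _ ⟨⟨z, y⟩, rfl⟩
    obtain ⟨x, rfl⟩ := hδ z
    obtain ⟨a, ha⟩ := hγ.surjective (γ x - y)
    refine ⟨(a, 0, x), by simp [dC3], ?_⟩
    simp [framingMap, hη', ha]
    abel
end

section
/- Let k be a perfect field of characteristic ≠ 2, V a finite-dimensional k-vector space, and (I₁, C₁, I₂, C₂, I₃, C₃) an indecomposable sextuple in V. The following are equivalent: (1) there exists a nondegenerate alternating bilinear form ω on V such that, for each i ∈ {1, 2, 3}, the ω-orthogonal {v ∈ V : ω(v, w) = 0 for all w ∈ Iᵢ} equals Cᵢ; (2) the sextuple is self-dual and dim V is even. -/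
/-- A family of pairs `I j ≤ C j` (`j : ZMod 3`) of subspaces of a nonzero space which has no
nontrivial direct sum decomposition. -/
structure IndecSextuple {k V : Type*} [Field k] [AddCommGroup V] [Module k V]
    (I C : ZMod 3 → Submodule k V) : Prop where
  nontrivial : Nontrivial V
  le : ∀ j, I j ≤ C j
  indec : ∀ A B : Submodule k V, IsCompl A B →
    (∀ j, I j ≤ (I j ⊓ A) ⊔ (I j ⊓ B)) → (∀ j, C j ≤ (C j ⊓ A) ⊔ (C j ⊓ B)) → A = ⊥ ∨ B = ⊥

/-- The linear map `f` preserves all the subspaces `I j` and `C j`. -/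
def Stabilizes {k V : Type*} [Field k] [AddCommGroup V] [Module k V]
    (I C : ZMod 3 → Submodule k V) (f : V →ₗ[k] V) : Prop :=
  ∀ j, (∀ x ∈ I j, f x ∈ I j) ∧ ∀ x ∈ C j, f x ∈ C j

section Indecomposable

variable {k V : Type*} [Field k] [AddCommGroup V] [Module k V] {I C : ZMod 3 → Submodule k V}

theorem eventually_le_inf_ker_pow_sup_inf_range_pow [FiniteDimensional k V] (f : V →ₗ[k] V)
    (X : Submodule k V) (hX : ∀ x ∈ X, f x ∈ X) :
    ∀ᶠ n in Filter.atTop,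
      X ≤ (X ⊓ LinearMap.ker (f ^ n)) ⊔ (X ⊓ LinearMap.range (f ^ n)) := by
  have h := (f.restrict hX).eventually_isCompl_ker_pow_range_pow
  filter_upwards [h] with n hn x hx
  have key : ∀ y : X, (((f.restrict hX) ^ n) y : V) = (f ^ n) y := by
    intro y
    rw [Module.End.pow_restrict]
    rfl
  obtain ⟨a, ha, b, hb, hab⟩ := Submodule.mem_sup.1 (hn.sup_eq_top ▸ Submodule.mem_top :
    (⟨x, hx⟩ : X) ∈ _)
  refine Submodule.mem_sup.2 ⟨a, ⟨a.2, ?_⟩, b, ⟨b.2, ?_⟩, congrArg Subtype.val hab⟩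
  · have := congrArg Subtype.val (LinearMap.mem_ker.1 ha)
    rw [key] at this
    exact this
  · obtain ⟨c, rfl⟩ := hb
    exact ⟨c, (key c).symm⟩

theorem IndecSextuple.isNilpotent_or_bijective [FiniteDimensional k V] (h : IndecSextuple I C)
    {f : V →ₗ[k] V} (hf : Stabilizes I C f) : IsNilpotent f ∨ Function.Bijective f := by
  have h1 := Filter.eventually_all.2 fun j =>
    eventually_le_inf_ker_pow_sup_inf_range_pow f (I j) (hf j).1
  have h2 := Filter.eventually_all.2 fun j =>
    eventually_le_inf_ker_pow_sup_inf_range_pow f (C j) (hf j).2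
  obtain ⟨n, ⟨⟨hn1, hn2⟩, hn⟩, hn0⟩ := (((h1.and h2).and
    f.eventually_isCompl_ker_pow_range_pow).and (Filter.eventually_ge_atTop 1)).exists
  rcases h.indec _ _ hn hn1 hn2 with h0 | h0
  · right
    have hinj : Function.Injective f := by
      rw [← LinearMap.ker_eq_bot, eq_bot_iff, ← h0]
      intro x hx
      rw [LinearMap.mem_ker] at hx ⊢
      obtain ⟨m, rfl⟩ := Nat.exists_eq_add_of_le' hn0
      rw [pow_succ, Module.End.mul_apply, hx, map_zero]
    exact ⟨hinj, LinearMap.injective_iff_surjective.1 hinj⟩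
  · left
    exact ⟨n, LinearMap.range_eq_bot.1 h0⟩

theorem Stabilizes.add {f g : V →ₗ[k] V} (hf : Stabilizes I C f) (hg : Stabilizes I C g) :
    Stabilizes I C (f + g) := fun j =>
  ⟨fun x hx => (I j).add_mem ((hf j).1 x hx) ((hg j).1 x hx),
    fun x hx => (C j).add_mem ((hf j).2 x hx) ((hg j).2 x hx)⟩

theorem Stabilizes.sub {f g : V →ₗ[k] V} (hf : Stabilizes I C f) (hg : Stabilizes I C g) :
    Stabilizes I C (f - g) := fun j =>
  ⟨fun x hx => (I j).sub_mem ((hf j).1 x hx) ((hg j).1 x hx),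
    fun x hx => (C j).sub_mem ((hf j).2 x hx) ((hg j).2 x hx)⟩

theorem Stabilizes.smul_one (c : k) : Stabilizes I C (c • (1 : V →ₗ[k] V)) := fun j =>
  ⟨fun _ hx => (I j).smul_mem c hx, fun _ hx => (C j).smul_mem c hx⟩

/-- Reindexing a sextuple by a permutation of the three pairs. -/
theorem IndecSextuple.comp_equiv (h : IndecSextuple I C) (e : ZMod 3 ≃ ZMod 3) :
    IndecSextuple (fun j => I (e j)) (fun j => C (e j)) where
  nontrivial := h.nontrivial
  le j := h.le _
  indec A B hAB h1 h2 := h.indec A B hAB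
    (fun j => by simpa using h1 (e.symm j)) (fun j => by simpa using h2 (e.symm j))

/-- An idempotent preserving an indecomposable sextuple is `0` or `1`. -/
theorem IndecSextuple.eq_zero_or_eq_one [FiniteDimensional k V] (h : IndecSextuple I C)
    {f : V →ₗ[k] V} (hf : Stabilizes I C f) (hi : IsIdempotentElem f) : f = 0 ∨ f = 1 := by
  rcases h.isNilpotent_or_bijective hf with h1 | h1
  · exact Or.inl (hi.eq_zero_of_isNilpotent h1)
  · right
    ext x
    apply h1.1
    rw [← Module.End.mul_apply, hi.eq]
    rfl

end Indecomposable

section Disjoint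

variable {k V : Type*} [Field k] [AddCommGroup V] [Module k V] {I C : ZMod 3 → Submodule k V}

theorem IndecSextuple.disjoint_of_sum_finrank_eq [FiniteDimensional k V] (h : IndecSextuple I C)
    (hd : ∑ j, (Module.finrank k (I j) + Module.finrank k (C j)) = 3 * Module.finrank k V)
    {i j : ZMod 3} (hij : i ≠ j) {x : V} (hi : x ∈ I i) (hj : x ∈ I j) : x = 0 := by
  by_contra hx
  obtain ⟨l, hl⟩ : ∃ l, ∀ m, m = i ∨ m = j ∨ m = l :=
    (by decide : ∀ i j : ZMod 3, i ≠ j → ∃ l, ∀ m, m = i ∨ m = j ∨ m = l) i j hij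
  obtain ⟨φ, hφx, hφI, hφC⟩ : ∃ φ : Module.Dual k V, φ x = 1 ∧
      (x ∈ I l ∨ ∀ y ∈ I l, φ y = 0) ∧ (x ∈ C l ∨ ∀ y ∈ C l, φ y = 0) := by
    have aux : ∀ p : Submodule k V, x ∉ p → ∃ φ : Module.Dual k V, φ x = 1 ∧ ∀ y ∈ p, φ y = 0 := by
      intro p hp
      obtain ⟨φ, h1, h2⟩ := p.exists_le_ker_of_notMem hp
      exact ⟨(φ x)⁻¹ • φ, by simp [h1], fun y hy => by simp [LinearMap.mem_ker.1 (h2 hy)]⟩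
    by_cases hC : x ∈ C l
    · by_cases hI : x ∈ I l
      · obtain ⟨φ, h1, -⟩ := aux ⊥ (by simpa using hx)
        exact ⟨φ, h1, Or.inl hI, Or.inl hC⟩
      · obtain ⟨φ, h1, h2⟩ := aux _ hI
        exact ⟨φ, h1, Or.inr h2, Or.inl hC⟩
    · obtain ⟨φ, h1, h2⟩ := aux _ hC
      exact ⟨φ, h1, Or.inr fun y hy => h2 y (h.le l hy), Or.inr h2⟩
  have aux2 : ∀ (p : Submodule k V) y, y ∈ p → (x ∈ p ∨ ∀ y ∈ p, φ y = 0) →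
      φ.smulRight x y ∈ p := by
    intro p y hy h'
    rcases h' with h' | h'
    · exact p.smul_mem _ h'
    · simp [h' y hy]
  have hst : Stabilizes I C (φ.smulRight x) := by
    intro m
    rcases hl m with rfl | rfl | rfl
    · exact ⟨fun y hy => aux2 _ y hy (Or.inl hi), fun y hy => aux2 _ y hy (Or.inl (h.le _ hi))⟩
    · exact ⟨fun y hy => aux2 _ y hy (Or.inl hj), fun y hy => aux2 _ y hy (Or.inl (h.le _ hj))⟩
    · exact ⟨fun y hy => aux2 _ y hy hφI, fun y hy => aux2 _ y hy hφC⟩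
  have hid : IsIdempotentElem (φ.smulRight x) := by
    ext y
    simp [hφx]
  rcases h.eq_zero_or_eq_one hst hid with h0 | h1
  · have := LinearMap.congr_fun h0 x
    simp [hφx] at this
    exact hx this
  · have key : ∀ y, φ y • x = y := fun y => LinearMap.congr_fun h1 y
    have htop : ∀ p : Submodule k V, x ∈ p → p = ⊤ := fun p hp =>
      eq_top_iff.2 fun y _ => key y ▸ p.smul_mem _ hp
    have hV : Module.finrank k V = 1 := finrank_eq_one x hx fun w => ⟨φ w, key w⟩
    have hle : ∑ m ∈ {i, j}, (Module.finrank k (I m) + Module.finrank k (C m)) ≤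
        ∑ m, (Module.finrank k (I m) + Module.finrank k (C m)) :=
      Finset.sum_le_sum_of_subset (Finset.subset_univ _)
    rw [Finset.sum_pair hij, hd, htop _ hi, htop _ hj, htop _ (h.le _ hi), htop _ (h.le _ hj),
      finrank_top, hV] at hle
    omega

end Disjoint

section Reflection

universe u v

variable {k : Type u} {V : Type v} [Field k] [AddCommGroup V] [Module k V]
  {I C : ZMod 3 → Submodule k V}

/-- Three maps out of `V` with kernels `I j` whose only relation is that their sum is zero. -/
theorem exists_maps_of_disjoint [FiniteDimensional k V] (I : ZMod 3 → Submodule k V)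
    (hI : ∀ i j, i ≠ j → ∀ x ∈ I i, x ∈ I j → x = 0) :
    ∃ (V' : Type v) (_ : AddCommGroup V') (_ : Module k V') (_ : FiniteDimensional k V')
      (f : ZMod 3 → V →ₗ[k] V'),
      (∀ v, ∑ i, f i v = 0) ∧ (∀ i v, f i v = 0 ↔ v ∈ I i) ∧
      (∀ p : ZMod 3 → V, ∑ i, f i (p i) = 0 → ∃ q, ∀ i, f i q = f i (p i)) ∧
      (⨆ i, LinearMap.range (f i) = ⊤) ∧
      Module.finrank k V' + ∑ i, Module.finrank k (I i) = 2 * Module.finrank k V := by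
  let L : V × (∀ i, I i) →ₗ[k] (ZMod 3 → V) :=
    LinearMap.coprod (LinearMap.pi fun _ => LinearMap.id)
      (LinearMap.pi fun i => (I i).subtype ∘ₗ LinearMap.proj i)
  have hL : ∀ p q i, L (p, q) i = p + q i := fun p q i => by simp [L]
  have hL0 : ∀ p q i j, i ≠ j → L (p, q) i = 0 → L (p, q) j = 0 → p = 0 := by
    intro p q i j hij hi hj
    rw [hL] at hi hj
    refine hI i j hij p ?_ ?_
    · rw [eq_neg_of_add_eq_zero_left hi]
      exact (I i).neg_mem (q i).2
    · rw [eq_neg_of_add_eq_zero_left hj]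
      exact (I j).neg_mem (q j).2
  have hinj : Function.Injective L := by
    rw [← LinearMap.ker_eq_bot, eq_bot_iff]
    rintro ⟨p, q⟩ hpq
    rw [LinearMap.mem_ker] at hpq
    have hp : p = 0 := hL0 p q 0 1 (by decide) (by simp [hpq]) (by simp [hpq])
    subst hp
    have hq : q = 0 := by
      ext i
      simpa [hL] using congrFun hpq i
    simp [hq]
  let f : ZMod 3 → V →ₗ[k] ((ZMod 3 → V) ⧸ LinearMap.range L) := fun i =>
    (LinearMap.range L).mkQ ∘ₗ LinearMap.single k (fun _ => V) i
  have hf : ∀ p : ZMod 3 → V, ∑ i, f i (p i) = (LinearMap.range L).mkQ p := by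
    intro p
    simp only [f, LinearMap.comp_apply, LinearMap.single_apply, ← map_sum,
      Finset.univ_sum_single]
  have hker : ∀ p : ZMod 3 → V, ∑ i, f i (p i) = 0 ↔ ∃ a, ∀ i, p i - a ∈ I i := by
    intro p
    rw [hf, Submodule.mkQ_apply, Submodule.Quotient.mk_eq_zero, LinearMap.mem_range]
    constructor
    · rintro ⟨⟨a, q⟩, rfl⟩
      exact ⟨a, fun i => by simp [hL]⟩
    · rintro ⟨a, ha⟩
      refine ⟨(a, fun i => ⟨p i - a, ha i⟩), ?_⟩
      ext i
      simp [hL]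
  have hzero : ∀ i v, f i v = 0 ↔ v ∈ I i := by
    intro i v
    have h1 : ∑ j, f j ((Pi.single i v : ZMod 3 → V) j) = f i v := by
      rw [Finset.sum_eq_single i]
      · simp
      · intro j _ hj
        simp [hj]
      · simp
    rw [← h1, hker]
    constructor
    · rintro ⟨a, ha⟩
      have h2 : ∀ j, j ≠ i → a ∈ I j := fun j hj => by
        simpa [hj] using ha j
      have h3 : a = 0 := hI (i + 1) (i + 2) (by simp +decide) a (h2 _ (by simp))
        (h2 _ (by simp +decide))
      simpa [h3] using ha i
    · intro hv
      refine ⟨0, fun j => ?_⟩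
      by_cases hj : j = i
      · subst hj
        simpa using hv
      · simp [hj]
  refine ⟨_, inferInstance, inferInstance, inferInstance, f, ?_, hzero, ?_, ?_, ?_⟩
  · intro v
    exact (hker fun _ => v).2 ⟨v, fun i => by simp⟩
  · intro p hp
    obtain ⟨a, ha⟩ := (hker p).1 hp
    refine ⟨a, fun i => ?_⟩
    rw [← sub_eq_zero, ← map_sub, hzero, ← neg_sub]
    exact (I i).neg_mem (ha i)
  · rw [eq_top_iff]
    rintro x -
    obtain ⟨p, rfl⟩ := Submodule.mkQ_surjective _ x
    rw [← hf]
    exact Submodule.sum_mem _ fun i _ =>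
      (le_iSup (fun i => LinearMap.range (f i)) i) (LinearMap.mem_range_self _ _)
  · have h1 := (LinearMap.range L).finrank_quotient_add_finrank
    rw [LinearMap.finrank_range_of_inj hinj, Module.finrank_prod, Module.finrank_pi_fintype,
      Module.finrank_pi_fintype, Finset.sum_const, Finset.card_univ, ZMod.card, smul_eq_mul] at h1
    omega

/-- The sextuple obtained from an indecomposable sextuple by the reflection construction. -/
theorem IndecSextuple.exists_reflection [FiniteDimensional k V] (h : IndecSextuple I C)
    (hd : ∑ j, (Module.finrank k (I j) + Module.finrank k (C j)) = 3 * Module.finrank k V) :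
    ∃ (V' : Type v) (_ : AddCommGroup V') (_ : Module k V') (_ : FiniteDimensional k V')
      (I' C' : ZMod 3 → Submodule k V') (f : ZMod 3 → V →ₗ[k] V'),
      IndecSextuple I' C' ∧
      (∑ j, (Module.finrank k (I' j) + Module.finrank k (C' j)) = 3 * Module.finrank k V') ∧
      (∀ v, ∑ i, f i v = 0) ∧ (∀ i v, f i v = 0 ↔ v ∈ I i) ∧
      (∀ i, I' i = (C i).map (f i)) ∧ (∀ i, C' i = LinearMap.range (f i)) := by
  have hI : ∀ i j, i ≠ j → ∀ x ∈ I i, x ∈ I j → x = 0 := fun i j hij x hi hj =>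
    h.disjoint_of_sum_finrank_eq hd hij hi hj
  obtain ⟨V', _, _, _, f, hsum, hker, hrel, htop, hdim⟩ := exists_maps_of_disjoint I hI
  refine ⟨V', _, _, inferInstance, fun i => (C i).map (f i), fun i => LinearMap.range (f i), f,
    ⟨?_, fun i => LinearMap.map_le_range, ?_⟩, ?_, hsum, hker, fun _ => rfl, fun _ => rfl⟩
  · by_contra hn
    rw [not_nontrivial_iff_subsingleton] at hn
    have := h.nontrivial
    obtain ⟨x, hx⟩ := exists_ne (0 : V)
    exact hx (hI 0 1 (by decide) x ((hker 0 x).1 (Subsingleton.elim _ _))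
      ((hker 1 x).1 (Subsingleton.elim _ _)))
  · intro A B hAB h1 h2
    have hdisj : ∀ y, y ∈ A → y ∈ B → y = 0 := fun y hA hB =>
      Submodule.disjoint_def.1 hAB.disjoint y hA hB
    have hmem : ∀ (D : Submodule k V') x, x ∈ (⨅ i, D.comap (f i)) ↔ ∀ i, f i x ∈ D := by
      intro D x
      simp [Submodule.mem_iInf]
    have hcompl : IsCompl (⨅ i, A.comap (f i)) (⨅ i, B.comap (f i)) := by
      constructor
      · rw [Submodule.disjoint_def]
        intro x hxA hxB
        rw [hmem] at hxA hxB
        exact hI 0 1 (by decide) x ((hker 0 x).1 (hdisj _ (hxA 0) (hxB 0)))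
          ((hker 1 x).1 (hdisj _ (hxA 1) (hxB 1)))
      · rw [codisjoint_iff, eq_top_iff]
        rintro x -
        have h3 : ∀ i, ∃ p, f i p ∈ A ∧ f i x - f i p ∈ B := by
          intro i
          obtain ⟨a, ⟨⟨p, rfl⟩, ha⟩, b, hb, hab⟩ :=
            Submodule.mem_sup.1 (h2 i (LinearMap.mem_range_self (f i) x))
          refine ⟨p, ha, ?_⟩
          rw [← hab, add_sub_cancel_left]
          exact hb.2
        choose p hpA hpB using h3
        have h4 : ∑ i, f i (p i) = 0 := by
          refine hdisj _ (A.sum_mem fun i _ => hpA i) ?_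
          have : ∑ i, f i (p i) = -∑ i, (f i x - f i (p i)) := by
            rw [Finset.sum_sub_distrib, hsum]
            simp
          rw [this]
          exact B.neg_mem (B.sum_mem fun i _ => hpB i)
        obtain ⟨q, hq⟩ := hrel p h4
        refine Submodule.mem_sup.2 ⟨q, (hmem _ _).2 fun i => hq i ▸ hpA i, x - q,
          (hmem _ _).2 fun i => ?_, by abel⟩
        rw [map_sub, hq]
        exact hpB i
    have hsplit : ∀ x, ∃ a b, a + b = x ∧ (∀ i, f i a ∈ A) ∧ (∀ i, f i b ∈ B) := by
      intro x
      obtain ⟨a, ha, b, hb, hab⟩ := Submodule.mem_sup.1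
        (hcompl.sup_eq_top ▸ Submodule.mem_top : x ∈ _)
      exact ⟨a, b, hab, (hmem _ _).1 ha, (hmem _ _).1 hb⟩
    have huniq : ∀ a b a' b' : V', a ∈ A → b ∈ B → a' ∈ A → b' ∈ B → a + b = a' + b' →
        a = a' ∧ b = b' := by
      intro a b a' b' ha hb ha' hb' heq
      have h5 : a - a' = b' - b := by
        rw [sub_eq_sub_iff_add_eq_add, heq, add_comm]
      have h6 := hdisj (a - a') (A.sub_mem ha ha') (h5 ▸ B.sub_mem hb' hb)
      refine ⟨sub_eq_zero.1 h6, (sub_eq_zero.1 (h5 ▸ h6)).symm⟩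
    have hfin : ∀ D : Submodule k V', (⨅ i, D.comap (f i)) = ⊤ → D = ⊤ := by
      intro D hD
      rw [eq_top_iff, ← htop, iSup_le_iff]
      rintro i _ ⟨x, rfl⟩
      exact (hmem D x).1 (hD ▸ Submodule.mem_top) i
    suffices hs : (⨅ i, A.comap (f i)) = ⊥ ∨ (⨅ i, B.comap (f i)) = ⊥ by
      rcases hs with h0 | h0
      · left
        have := hfin B (by simpa [h0] using hcompl.sup_eq_top)
        simpa [this] using hAB.inf_eq_bot
      · right
        have := hfin A (by simpa [h0] using hcompl.sup_eq_top)
        simpa [this] using hAB.inf_eq_bot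
    refine h.indec _ _ hcompl ?_ ?_
    · intro i x hx
      obtain ⟨a, b, rfl, ha, hb⟩ := hsplit x
      have h5 := huniq (f i a) (f i b) 0 0 (ha i) (hb i) A.zero_mem B.zero_mem
        (by rw [← map_add, (hker i _).2 hx, add_zero])
      exact Submodule.mem_sup.2 ⟨a, ⟨(hker i a).1 h5.1, (hmem _ _).2 ha⟩, b,
        ⟨(hker i b).1 h5.2, (hmem _ _).2 hb⟩, rfl⟩
    · intro i x hx
      obtain ⟨a, b, rfl, ha, hb⟩ := hsplit x
      obtain ⟨a', ⟨⟨c, hc, rfl⟩, ha'⟩, b', ⟨⟨d, hd', rfl⟩, hb'⟩, hab⟩ :=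
        Submodule.mem_sup.1 (h1 i (Submodule.mem_map_of_mem hx))
      have h5 := huniq (f i a) (f i b) (f i c) (f i d) (ha i) (hb i) ha' hb'
        (by rw [← map_add, hab])
      have h6 : ∀ y z, z ∈ C i → f i y = f i z → y ∈ C i := by
        intro y z hz hyz
        rw [← sub_eq_zero, ← map_sub, hker] at hyz
        simpa using (C i).add_mem (h.le i hyz) hz
      exact Submodule.mem_sup.2 ⟨a, ⟨h6 a c hc h5.1, (hmem _ _).2 ha⟩, b,
        ⟨h6 b d hd' h5.2, (hmem _ _).2 hb⟩, rfl⟩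
  · have hk : ∀ i, LinearMap.ker (f i) = I i := fun i => by
      ext x
      rw [LinearMap.mem_ker, hker]
    have h1 : ∀ i, Module.finrank k (LinearMap.range (f i)) + Module.finrank k (I i) =
        Module.finrank k V := fun i => by
      rw [← hk]
      exact (f i).finrank_range_add_finrank_ker
    have h2 : ∀ i, Module.finrank k ((C i).map (f i)) + Module.finrank k (I i) =
        Module.finrank k (C i) := fun i => by
      have := ((f i).domRestrict (C i)).finrank_range_add_finrank_ker
      rw [LinearMap.range_domRestrict, LinearMap.ker_domRestrict, hk] at this
      rw [← this, (Submodule.comapSubtypeEquivOfLe (h.le i)).finrank_eq]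
    have h3 := Finset.sum_congr rfl fun i (_ : i ∈ Finset.univ) => h1 i
    have h4 := Finset.sum_congr rfl fun i (_ : i ∈ Finset.univ) => h2 i
    simp only [Finset.sum_add_distrib, Finset.sum_const, Finset.card_univ, ZMod.card,
      smul_eq_mul] at h3 h4 hd ⊢
    omega

end Reflection

section Chains

universe u v

theorem ZMod.sum_three {M : Type*} [AddCommMonoid M] (g : ZMod 3 → M) (i : ZMod 3) :
    ∑ j, g j = g i + g (i + 1) + g (i + 2) := by
  rw [← Equiv.sum_comp (Equiv.addLeft i) g]
  have : ∀ h : ZMod 3 → M, ∑ j, h j = h 0 + h 1 + h 2 := fun h => Fin.sum_univ_three h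
  rw [this]
  simp

/-- A finitely supported chain `x 0 = 0, x 1, x 2, …` with `x i ∈ I i` and
`x i - x (i + 1) ∈ C (i + 2)` vanishes. -/
theorem IndecSextuple.chain_eq_zero {k : Type u} [Field k] (N : ℕ) :
    ∀ {V : Type v} [AddCommGroup V] [Module k V] [FiniteDimensional k V]
      {I C : ZMod 3 → Submodule k V}, IndecSextuple I C →
      (∑ j, (Module.finrank k (I j) + Module.finrank k (C j)) = 3 * Module.finrank k V) →
      ∀ x : ℕ → V, x 0 = 0 → (∀ i, N ≤ i → x i = 0) → (∀ i : ℕ, x i ∈ I i) →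
      (∀ i : ℕ, x i - x (i + 1) ∈ C (i + 2)) → ∀ i, x i = 0 := by
  induction N with
  | zero => exact fun _ _ x _ hN _ _ i => hN i (Nat.zero_le i)
  | succ M ih =>
    intro V _ _ _ I C h hd x hx0 hN hI hC
    obtain ⟨V', _, _, _, I', C', f, h', hd', hsum, hker, hI', hC'⟩ := h.exists_reflection hd
    obtain ⟨V'', _, _, _, I'', C'', f', h'', hd'', hsum', hker', hI'', hC''⟩ :=
      h'.exists_reflection hd'
    have e1 : ∀ a : ZMod 3, a + 1 + 2 = a := by decide
    have e2 : ∀ a : ZMod 3, a + 2 + 2 = a + 1 := by decide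
    have n1 : ∀ a : ZMod 3, a ≠ a + 1 := by decide
    have n2 : ∀ a : ZMod 3, a ≠ a + 2 := by decide
    have hsum3 : ∀ (a : ZMod 3) v, f a v + f (a + 1) v + f (a + 2) v = 0 := fun a v => by
      rw [← ZMod.sum_three fun j => f j v, hsum]
    have hsum3' : ∀ (a : ZMod 3) v, f' a v + f' (a + 1) v + f' (a + 2) v = 0 := fun a v => by
      rw [← ZMod.sum_three fun j => f' j v, hsum']
    obtain ⟨T, hT⟩ : ∃ T : ℕ → V', ∀ i : ℕ, T i = f i (x (i + 1)) := ⟨_, fun _ => rfl⟩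
    have hT2 : ∀ i : ℕ, T i = -f (i + 2) (x (i + 1)) := by
      intro i
      have h1 := hsum3 i (x (i + 1))
      have h2 : f ((i : ZMod 3) + 1) (x (i + 1)) = 0 := by
        rw [hker]
        exact_mod_cast hI (i + 1)
      rw [h2, add_zero, ← hT] at h1
      exact eq_neg_of_add_eq_zero_left h1
    have hTC : ∀ i : ℕ, T i ∈ C' i := fun i => by
      rw [hT, hC']
      exact LinearMap.mem_range_self _ _
    have hTI : ∀ i : ℕ, T i + T (i + 1) ∈ I' i := by
      intro i
      have h1 : T i + T (i + 1) = f i (x (i + 1) - x (i + 2)) := by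
        rw [hT2 (i + 1), hT, map_sub, Nat.cast_add, Nat.cast_one, e1, sub_eq_add_neg]
      rw [h1, hI']
      have h2 := hC (i + 1)
      rw [Nat.cast_add, Nat.cast_one, e1] at h2
      exact Submodule.mem_map_of_mem h2
    have hT0 : T 0 ∈ I' (((0 : ℕ) : ZMod 3) + 2) := by
      rw [hT2, hI', ← map_neg]
      refine Submodule.mem_map_of_mem ?_
      simpa [hx0] using hC 0
    obtain ⟨w, hw⟩ : ∃ w : ℕ → V'', ∀ i : ℕ, w i = -f' (i + 2) (T i) := ⟨_, fun _ => rfl⟩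
    have hw1 : ∀ i : ℕ, w (i + 1) = f' i (T i) := by
      intro i
      have h1 := (hker' _ _).2 (hTI i)
      rw [hw, Nat.cast_add, Nat.cast_one, e1]
      rw [map_add] at h1
      exact (eq_neg_of_add_eq_zero_left h1).symm
    have hw0 : w 0 = 0 := by
      rw [hw, (hker' _ _).2 hT0, neg_zero]
    have hall := ih (h''.comp_equiv (Equiv.addRight 2))
      (by rw [← hd'']; exact Equiv.sum_comp (Equiv.addRight (2 : ZMod 3))
            fun j => Module.finrank k (I'' j) + Module.finrank k (C'' j)) w hw0
      (fun i hi => by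
        rw [hw, hT, hN (i + 1) (by omega)]
        simp)
      (fun i => by
        cases i with
        | zero => rw [hw0]; exact Submodule.zero_mem _
        | succ i =>
          simp only [Equiv.coe_addRight, Nat.cast_add, Nat.cast_one, e1]
          rw [hw1, hI'']
          exact Submodule.mem_map_of_mem (hTC i))
      (fun i => by
        simp only [Equiv.coe_addRight, e2]
        have h1 : w i - w (i + 1) = f' (i + 1) (T i) := by
          rw [hw1, hw]
          have h2 := hsum3' i (T i)
          rw [← sub_eq_zero, ← neg_eq_zero]
          rw [← h2]
          abel
        rw [h1, hC'']
        exact LinearMap.mem_range_self _ _)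
    have hTz : ∀ i, T i = 0 := by
      intro i
      have h1 : T i ∈ I' i := by
        rw [← hker', ← hw1, hall]
      have h2 : T i ∈ I' (i + 2) := by
        rw [← hker', ← neg_eq_zero, ← hw, hall]
      exact h'.disjoint_of_sum_finrank_eq hd' (n2 i) h1 h2
    intro i
    cases i with
    | zero => exact hx0
    | succ i =>
      have h1 : x (i + 1) ∈ I i := by
        rw [← hker, ← hT, hTz]
      have h2 : x (i + 1) ∈ I (i + 1) := by exact_mod_cast hI (i + 1)
      exact h.disjoint_of_sum_finrank_eq hd (n1 i) h1 h2

end Chains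

/-- A nondegenerate symmetric bilinear form for which `I j` and `C j` are mutually orthogonal
complements. -/
structure SymmCompatible {k V : Type*} [Field k] [AddCommGroup V] [Module k V]
    (B : LinearMap.BilinForm k V) (I C : ZMod 3 → Submodule k V) : Prop where
  symm : ∀ x y, B x y = B y x
  eq_zero : ∀ x, (∀ y, B x y = 0) → x = 0
  mem_I : ∀ j x, x ∈ I j ↔ ∀ y ∈ C j, B x y = 0
  mem_C : ∀ j x, x ∈ C j ↔ ∀ y ∈ I j, B x y = 0

section Extension

variable {k V : Type*} [Field k] [AddCommGroup V] [Module k V]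
  {I C : ZMod 3 → Submodule k V} {B : LinearMap.BilinForm k V}

theorem SymmCompatible.comp_equiv (hB : SymmCompatible B I C) (e : ZMod 3 ≃ ZMod 3) :
    SymmCompatible B (fun j => I (e j)) (fun j => C (e j)) where
  symm := hB.symm
  eq_zero := hB.eq_zero
  mem_I _ := hB.mem_I _
  mem_C _ := hB.mem_C _

theorem SymmCompatible.exists_eq [FiniteDimensional k V] (hB : SymmCompatible B I C)
    (φ : Module.Dual k V) :
    ∃ s, ∀ v, B s v = φ v := by
  have hinj : Function.Injective B := by
    rw [← LinearMap.ker_eq_bot, eq_bot_iff]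
    intro x hx
    rw [LinearMap.mem_ker] at hx
    exact hB.eq_zero x fun y => by rw [hx]; rfl
  obtain ⟨s, hs⟩ := (LinearMap.injective_iff_surjective_of_finrank_eq_finrank
    (Subspace.dual_finrank_eq (K := k) (V := V)).symm).1 hinj φ
  exact ⟨s, fun v => by rw [hs]⟩

theorem SymmCompatible.apply_eq_zero (hB : SymmCompatible B I C) {j : ZMod 3} {x y : V}
    (hx : x ∈ I j) (hy : y ∈ C j) : B x y = 0 :=
  (hB.mem_I j x).1 hx y hy

theorem SymmCompatible.apply_eq_zero' (hB : SymmCompatible B I C) {j : ZMod 3} {x y : V}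
    (hx : x ∈ C j) (hy : y ∈ I j) : B x y = 0 :=
  (hB.mem_C j x).1 hx y hy

theorem SymmCompatible.exists_of_notMem_sup [FiniteDimensional k V]
    (hB : SymmCompatible B I C) {a b : ZMod 3} {x : V}
    (hx : x ∉ C a ⊔ I b) : ∃ s ∈ I a, s ∈ C b ∧ B s x ≠ 0 := by
  obtain ⟨φ, h1, h2⟩ := Submodule.exists_le_ker_of_notMem hx
  obtain ⟨s, hs⟩ := hB.exists_eq φ
  refine ⟨s, (hB.mem_I _ _).2 fun y hy => ?_, (hB.mem_C _ _).2 fun y hy => ?_, by rwa [hs]⟩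
  · rw [hs]
    exact h2 (Submodule.mem_sup_left hy)
  · rw [hs]
    exact h2 (Submodule.mem_sup_right hy)

theorem IndecSextuple.apply_chain_eq_zero [FiniteDimensional k V] (h : IndecSextuple I C)
    (hB : SymmCompatible B I C)
    {n : ℕ} {x y : ℕ → V} (hx0 : x 0 = 0) (hxI : ∀ i : ℕ, i ≤ n → x i ∈ I i)
    (hxC : ∀ i : ℕ, i < n → x i - x (i + 1) ∈ C (i + 2)) (hyn : y (n + 1) = 0)
    (hy1 : ∀ i : ℕ, 1 ≤ i → i ≤ n → y i ∈ C (i + 1))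
    (hy2 : ∀ i : ℕ, 1 ≤ i → i ≤ n → y i ∈ C (i + 2))
    (hyI : ∀ i : ℕ, 1 ≤ i → i ≤ n → y i + y (i + 1) ∈ I (i + 2)) (hynI : y n ∈ I (n + 2)) :
    B (y n) (x n) = 0 := by
  by_contra hne
  have hn : 1 ≤ n := by
    rcases Nat.eq_zero_or_pos n with rfl | hn
    · simp [hx0] at hne
    · exact hn
  have tri : ∀ a b : ZMod 3, a = b ∨ a = b + 1 ∨ a = b + 2 := by decide
  have e1 : ∀ a : ZMod 3, a + 1 + 2 = a := by decide
  have e2 : ∀ a : ZMod 3, a + 2 + 2 = a + 1 := by decide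
  have e3 : ∀ a : ZMod 3, a + 2 + 1 = a := by decide
  have e4 : ∀ a : ZMod 3, a + 1 + 1 = a + 2 := by decide
  have hyv : ∀ (j : ZMod 3) v, v ∈ C j → ∀ i : ℕ, 1 ≤ i → i ≤ n → (i : ZMod 3) = j + 1 →
      B (y (i + 1)) v = -B (y i) v := by
    intro j v hv i hi1 hin hij
    have h1 := hyI i hi1 hin
    rw [hij, e1] at h1
    have h2 := hB.apply_eq_zero h1 hv
    rw [map_add, LinearMap.add_apply] at h2
    exact eq_neg_of_add_eq_zero_right h2
  obtain ⟨f, hf⟩ : ∃ f : V →ₗ[k] V, ∀ v, f v = ∑ i ∈ Finset.range (n + 1), B (y i) v • x i :=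
    ⟨∑ i ∈ Finset.range (n + 1), (B (y i)).smulRight (x i), fun v => by
      simp [LinearMap.sum_apply]⟩
  have hst : Stabilizes I C f := by
    intro j
    constructor
    · intro v hv
      rw [hf]
      refine Submodule.sum_mem _ fun i hi => ?_
      have hin : i ≤ n := by
        rw [Finset.mem_range] at hi
        omega
      rcases Nat.eq_zero_or_pos i with rfl | hi1
      · rw [hx0, smul_zero]
        exact Submodule.zero_mem _
      rcases tri j i with rfl | rfl | rfl
      · exact Submodule.smul_mem _ _ (hxI i hin)
      · rw [hB.apply_eq_zero' (hy1 i hi1 hin) hv, zero_smul]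
        exact Submodule.zero_mem _
      · rw [hB.apply_eq_zero' (hy2 i hi1 hin) hv, zero_smul]
        exact Submodule.zero_mem _
    · intro v hv
      have key : ∀ m, m ≤ n →
          (((m : ZMod 3) = j + 1) →
            ∑ i ∈ Finset.range (m + 1), B (y i) v • x i - B (y m) v • x m ∈ C j) ∧
          (((m : ZMod 3) ≠ j + 1) → ∑ i ∈ Finset.range (m + 1), B (y i) v • x i ∈ C j) := by
        intro m
        induction m with
        | zero => simp [hx0]
        | succ m ih =>
          intro hm
          specialize ih (by omega)
          rw [Finset.sum_range_succ]
          constructor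
          · intro hj
            rw [add_sub_cancel_right]
            apply ih.2
            rw [Nat.cast_add, Nat.cast_one] at hj
            rw [add_right_cancel hj]
            exact (by decide : ∀ a : ZMod 3, a ≠ a + 1) j
          · intro hj
            rcases tri ((m + 1 : ℕ) : ZMod 3) j with h1 | h1 | h1
            · refine Submodule.add_mem _ (ih.2 ?_) (Submodule.smul_mem _ _ ?_)
              · rw [Nat.cast_add, Nat.cast_one] at h1
                rw [← h1]
                exact (by decide : ∀ a : ZMod 3, a ≠ a + 1 + 1) m
              · rw [← h1]
                exact h.le _ (hxI _ hm)
            · exact absurd h1 hj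
            · have h2 : (m : ZMod 3) = j + 1 := by
                rw [Nat.cast_add, Nat.cast_one, ← e4] at h1
                exact add_right_cancel h1
              have h3 : B (y m) v • x m + B (y (m + 1)) v • x (m + 1) =
                  B (y (m + 1)) v • (x (m + 1) - x m) := by
                rcases Nat.eq_zero_or_pos m with rfl | hm1
                · simp [hx0]
                · rw [hyv j v hv m hm1 (by omega) h2]
                  module
              have h4 : x m - x (m + 1) ∈ C j := by
                have := hxC m (by omega)
                rwa [h2, e1] at this
              have h5 := Submodule.add_mem _ (ih.1 h2) (Submodule.smul_mem (C j)
                (B (y (m + 1)) v) ((C j).neg_mem h4))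
              rw [neg_sub, ← h3] at h5
              convert h5 using 1
              abel
      rw [hf]
      by_cases hnj : (n : ZMod 3) = j + 1
      · have h1 := (key n le_rfl).1 hnj
        have h2 := hyv j v hv n hn le_rfl hnj
        rw [hyn] at h2
        have h3 : B (y n) v = 0 := by
          simpa using h2.symm
        rwa [h3, zero_smul, sub_zero] at h1
      · exact (key n le_rfl).2 hnj
  have hdiag : ∀ j i : ℕ, j < i → i ≤ n → (i : ZMod 3) = j → B (y i) (x j) = 0 := by
    intro j
    induction j with
    | zero => simp [hx0]
    | succ j ih =>
      intro i hji hin hij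
      obtain ⟨l, rfl⟩ : ∃ l, i = l + 1 := ⟨i - 1, by omega⟩
      have hlj : (l : ZMod 3) = j := by
        rw [Nat.cast_add, Nat.cast_add] at hij
        exact add_right_cancel hij
      have h1 := ih l (by omega) (by omega) hlj
      have h2 := hyI l (by omega) (by omega)
      have h3 := hxC j (by omega)
      rw [← hlj] at h3
      have h4 := hB.apply_eq_zero h2 h3
      have h5 : B (y l) (x (j + 1)) = 0 := by
        refine hB.apply_eq_zero' (hy1 l (by omega) (by omega)) ?_
        have := hxI (j + 1) (by omega)
        rwa [Nat.cast_add, Nat.cast_one, ← hlj] at this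
      have h6 : B (y (l + 1)) (x j) = 0 := by
        refine hB.apply_eq_zero' (hy2 (l + 1) (by omega) (by omega)) ?_
        rw [Nat.cast_add, Nat.cast_one, e1, hlj]
        exact hxI j (by omega)
      simpa [h1, h5, h6] using h4
  have hoff : ∀ i : ℕ, i < n → B (y n) (x i) = 0 := by
    intro i hi
    rcases tri i n with h1 | h1 | h1
    · exact hdiag i n hi le_rfl h1.symm
    · exact hB.apply_eq_zero' (hy1 n hn le_rfl) (h1 ▸ hxI i hi.le)
    · exact hB.apply_eq_zero' (hy2 n hn le_rfl) (h1 ▸ hxI i hi.le)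
  have hφ : ∀ v, B (y n) (f v) = B (y n) (x n) * B (y n) v := by
    intro v
    rw [hf, map_sum, Finset.sum_range_succ, Finset.sum_eq_zero, zero_add, map_smul, smul_eq_mul,
      mul_comm]
    intro i hi
    rw [map_smul, hoff i (Finset.mem_range.1 hi), smul_zero]
  have hyy : ∀ i : ℕ, 1 ≤ i → i ≤ n → B (y i) (y n) = 0 := by
    have hyyn : ∀ i : ℕ, 1 ≤ i → i ≤ n → (i : ZMod 3) = n → B (y i) (y n) = 0 := by
      intro i hi hin h1
      have h2 := hy2 i hi hin
      rw [h1] at h2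
      exact hB.apply_eq_zero' h2 hynI
    intro i hi hin
    rcases tri i n with h1 | h1 | h1
    · exact hyyn i hi hin h1
    · have h2 := hy1 i hi hin
      rw [h1, e4] at h2
      exact hB.apply_eq_zero' h2 hynI
    · have hin' : i ≠ n := by
        rintro rfl
        exact (by decide : ∀ a : ZMod 3, a ≠ a + 2) _ h1
      have h2 := hyv _ _ (hy1 n hn le_rfl) i hi hin (by rw [h1, e4])
      rw [hyyn (i + 1) (by omega) (by omega) (by rw [Nat.cast_add, Nat.cast_one, h1, e3])] at h2
      simpa using h2.symm
  have hfy : f (y n) = 0 := by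
    rw [hf]
    refine Finset.sum_eq_zero fun i hi => ?_
    rw [Finset.mem_range] at hi
    rcases Nat.eq_zero_or_pos i with rfl | hi1
    · rw [hx0, smul_zero]
    · rw [hyy i hi1 (by omega), zero_smul]
  rcases h.isNilpotent_or_bijective hst with ⟨m, hm⟩ | hbij
  · have h1 : ∀ r v, B (y n) ((f ^ r) v) = B (y n) (x n) ^ r * B (y n) v := by
      intro r
      induction r with
      | zero => simp
      | succ r ih =>
        intro v
        rw [pow_succ', Module.End.mul_apply, hφ, ih]
        ring
    have h2 := h1 m (x n)
    rw [hm, LinearMap.zero_apply, map_zero] at h2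
    exact mul_ne_zero (pow_ne_zero _ hne) hne h2.symm
  · have h1 : y n = 0 := hbij.1 (by rw [hfy, map_zero])
    rw [h1] at hne
    simp at hne

/-- Chains can be prolonged. -/
theorem IndecSextuple.exists_chain_extension [FiniteDimensional k V] (n : ℕ) :
    ∀ {I C : ZMod 3 → Submodule k V},
    IndecSextuple I C → SymmCompatible B I C → ∀ x : ℕ → V, x 0 = 0 →
    (∀ i : ℕ, i ≤ n → x i ∈ I i) → (∀ i : ℕ, i < n → x i - x (i + 1) ∈ C (i + 2)) →
    ∃ z ∈ I (n + 1), x n - z ∈ C (n + 2) := by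
  induction n using Nat.strong_induction_on with
  | _ n ih =>
  intro I C h hB x hx0 hxI hxC
  by_contra hcon
  have hnot : x n ∉ C (n + 2) ⊔ I (n + 1) := by
    intro hmem
    obtain ⟨a, ha, b, hb, hab⟩ := Submodule.mem_sup.1 hmem
    exact hcon ⟨b, hb, by rwa [← hab, add_sub_cancel_right]⟩
  obtain ⟨s, hsI, hsC, hs⟩ := hB.exists_of_notMem_sup hnot
  have hn : 1 ≤ n := by
    rcases Nat.eq_zero_or_pos n with rfl | hn
    · simp [hx0] at hs
    · exact hn
  have h3 : (3 : ZMod 3) = 0 := rfl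
  have e1 : ∀ a : ZMod 3, a - 1 = a + 2 := by decide
  have e2 : ∀ a : ZMod 3, a - 2 = a + 1 := by decide
  let e : ZMod 3 ≃ ZMod 3 := Equiv.subLeft (n : ZMod 3)
  have he : ∀ a, e a = n - a := fun a => rfl
  have hchain : ∀ m, 1 ≤ m → m ≤ n → ∃ t : ℕ → V, t 0 = 0 ∧ t 1 = s ∧
      (∀ i : ℕ, i ≤ m → t i ∈ I (e i)) ∧
      (∀ i : ℕ, i < m → t i - t (i + 1) ∈ C (e (i + 2))) := by
    intro m hm
    induction m, hm using Nat.le_induction with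
    | base =>
      intro _
      refine ⟨fun i => if i = 1 then s else 0, by simp, by simp, fun i hi => ?_, fun i hi => ?_⟩
      · rcases (by omega : i = 0 ∨ i = 1) with rfl | rfl
        · simp
        · simpa [he, e1] using hsI
      · obtain rfl : i = 0 := by omega
        simpa [he, e2] using hsC
    | succ m hm ihm =>
      intro hmn
      obtain ⟨t, ht0, ht1, htI, htC⟩ := ihm (by omega)
      obtain ⟨z, hz, hz'⟩ := ih m (by omega) (h.comp_equiv e) (hB.comp_equiv e) t ht0 htI htC
      refine ⟨Function.update t (m + 1) z, ?_, ?_, fun i hi => ?_, fun i hi => ?_⟩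
      · rw [Function.update_of_ne (by omega), ht0]
      · rw [Function.update_of_ne (by omega), ht1]
      · by_cases him : i = m + 1
        · subst him
          simpa using hz
        · rw [Function.update_of_ne him]
          exact htI i (by omega)
      · rw [Function.update_of_ne (by omega)]
        by_cases him : i = m
        · subst him
          simpa using hz'
        · rw [Function.update_of_ne (by omega)]
          exact htC i (by omega)
  obtain ⟨t, ht0, ht1, htI, htC⟩ := hchain n hn le_rfl
  let Y : ℕ → V := fun l => Nat.rec 0 (fun l r => t (l + 1) - r) l
  have hY0 : Y 0 = 0 := rfl
  have hYs : ∀ l, Y (l + 1) = t (l + 1) - Y l := fun l => rfl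
  have hY1 : Y (0 + 1) = s := by rw [hYs, hY0, sub_zero, ht1]
  have hYC : ∀ l : ℕ, l ≤ n → (Y l ∈ C (e l) ∧ Y l ∈ C (e (l + 1))) ∧
      (l + 1 ≤ n → Y (l + 1) ∈ C (e (l + 1)) ∧ Y (l + 1) ∈ C (e (l + 2))) := by
    intro l
    induction l with
    | zero =>
      intro _
      refine ⟨by simp [hY0], fun _ => ?_⟩
      rw [hY1]
      constructor
      · have := h.le _ (htI 1 hn)
        rw [ht1] at this
        exact_mod_cast this
      · simpa [he, e2] using hsC
    | succ l ihl =>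
      intro hl
      have h0 := (ihl (by omega)).1
      have h1 := (ihl (by omega)).2 hl
      have h1' : Y (l + 1) ∈ C (e (((l + 1 : ℕ) : ZMod 3) + 1)) := by
        rw [Nat.cast_add, Nat.cast_one, add_assoc, one_add_one_eq_two]
        exact h1.2
      refine ⟨⟨by exact_mod_cast h1.1, h1'⟩, fun hl' => ⟨?_, ?_⟩⟩
      · rw [hYs]
        refine Submodule.sub_mem _ ?_ h1'
        exact_mod_cast h.le _ (htI (l + 1 + 1) hl')
      · have h4 := htC (l + 1) (by omega)
        have h5 : Y (l + 1 + 1) = Y l - (t (l + 1) - t (l + 1 + 1)) := by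
          rw [hYs, hYs]
          abel
        rw [h5]
        refine Submodule.sub_mem _ ?_ h4
        have h6 : ((l + 1 : ℕ) : ZMod 3) + 2 = l := by
          rw [Nat.cast_add, Nat.cast_one]
          linear_combination h3
        rw [h6]
        exact h0.1
  have hcast : ∀ i : ℕ, i ≤ n + 1 → ((n + 1 - i : ℕ) : ZMod 3) = n + 1 - i := fun i hi => by
    rw [Nat.cast_sub hi, Nat.cast_add, Nat.cast_one]
  refine hs ?_
  have hfin := h.apply_chain_eq_zero hB (y := fun i => Y (n + 1 - i)) hx0 hxI hxC
    (by simp [hY0]) ?_ ?_ ?_ ?_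
  · simpa [← hY1] using hfin
  · intro i hi hin
    have h4 := ((hYC (n + 1 - i) (by omega)).1).2
    rw [he, hcast i (by omega)] at h4
    convert h4 using 2
    linear_combination h3
  · intro i hi hin
    have h4 := ((hYC (n + 1 - i) (by omega)).1).1
    rw [he, hcast i (by omega)] at h4
    convert h4 using 2
    linear_combination h3
  · intro i hi hin
    have h4 : Y (n + 1 - i) + Y (n + 1 - (i + 1)) = t (n + 1 - i) := by
      obtain ⟨l, hl⟩ : ∃ l, n + 1 - i = l + 1 := ⟨n - i, by omega⟩
      rw [hl, (by omega : n + 1 - (i + 1) = l), hYs, sub_add_cancel]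
    have h5 := htI (n + 1 - i) (by omega)
    rw [he, hcast i (by omega), ← h4] at h5
    convert h5 using 2
    linear_combination h3
  · simpa [← hY1] using hsI

end Extension

section Transversality

variable {k V : Type*} [Field k] [AddCommGroup V] [Module k V]
  {I C : ZMod 3 → Submodule k V} {B : LinearMap.BilinForm k V}

theorem exists_last_ne_zero {v : ℕ → V} {α : ℕ → k} (D : ℕ)
    (hsum : ∑ j ∈ Finset.range D, α j • v j = 0) (hα : ∃ j < D, α j ≠ 0) :
    ∃ J < D, α J ≠ 0 ∧ ∑ j ∈ Finset.range (J + 1), α j • v j = 0 := by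
  induction D with
  | zero => simp at hα
  | succ D ih =>
    by_cases hD : α D = 0
    · rw [Finset.sum_range_succ, hD, zero_smul, add_zero] at hsum
      obtain ⟨j, hj, hj0⟩ := hα
      have : j ≠ D := by
        rintro rfl
        exact hj0 hD
      obtain ⟨J, hJ, h1⟩ := ih hsum ⟨j, by omega, hj0⟩
      exact ⟨J, by omega, h1⟩
    · exact ⟨D, by omega, hD, hsum⟩

variable [FiniteDimensional k V]

theorem SymmCompatible.finrank_add (hB : SymmCompatible B I C) (j : ZMod 3) :
    Module.finrank k (I j) + Module.finrank k (C j) = Module.finrank k V := by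
  have hn : B.Nondegenerate := ⟨fun x hx => hB.eq_zero x hx, fun x hx =>
    hB.eq_zero x fun y => by rw [hB.symm, hx]⟩
  have hr : B.IsRefl := fun x y hxy => by rw [hB.symm, hxy]
  have hC : C j = B.orthogonal (I j) := by
    ext x
    rw [hB.mem_C, LinearMap.BilinForm.mem_orthogonal_iff]
    exact forall₂_congr fun y _ => by rw [hB.symm]
  have h1 := LinearMap.BilinForm.finrank_orthogonal hn (I j)
  have h2 := Submodule.finrank_le (I j)
  rw [hC, h1]
  omega

theorem SymmCompatible.sum_finrank (hB : SymmCompatible B I C) :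
    ∑ j, (Module.finrank k (I j) + Module.finrank k (C j)) = 3 * Module.finrank k V := by
  simp [hB.finrank_add, ZMod.card]

theorem exists_relation (v : ℕ → V) : ∃ (α : ℕ → k) (J : ℕ), J < Module.finrank k V + 1 ∧
    α J ≠ 0 ∧ ∑ j ∈ Finset.range (J + 1), α j • v j = 0 := by
  have hdep : ¬ LinearIndependent k fun i : Fin (Module.finrank k V + 1) => v i := by
    intro hli
    have := hli.fintype_card_le_finrank
    rw [Fintype.card_fin] at this
    omega
  obtain ⟨g, hg, i, hi⟩ := Fintype.not_linearIndependent_iff.1 hdep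
  let α : ℕ → k := fun j => if h : j < Module.finrank k V + 1 then g ⟨j, h⟩ else 0
  have hα : ∀ i : Fin (Module.finrank k V + 1), α i = g i := fun i => dif_pos i.2
  refine ⟨α, exists_last_ne_zero _ ?_ ⟨i, i.2, by rwa [hα]⟩⟩
  rw [← Fin.sum_univ_eq_sum_range (fun j => α j • v j), ← hg]
  exact Finset.sum_congr rfl fun i _ => by rw [hα]

theorem IndecSextuple.exists_chain (h : IndecSextuple I C) (hB : SymmCompatible B I C) {s : V}
    (hs : s ∈ I 1) (hs' : s ∈ C 2) (n : ℕ) : ∃ x : ℕ → V, x 0 = 0 ∧ x 1 = s ∧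
      (∀ i : ℕ, i ≤ n + 1 → x i ∈ I i) ∧
      (∀ i : ℕ, i < n + 1 → x i - x (i + 1) ∈ C (i + 2)) := by
  induction n with
  | zero =>
    refine ⟨fun i => if i = 1 then s else 0, by simp, by simp, fun i hi => ?_, fun i hi => ?_⟩
    · rcases (by omega : i = 0 ∨ i = 1) with rfl | rfl
      · simp
      · simpa using hs
    · obtain rfl : i = 0 := by omega
      simpa using hs'
  | succ m ihm =>
    obtain ⟨t, ht0, ht1, htI, htC⟩ := ihm
    obtain ⟨z, hz, hz'⟩ := IndecSextuple.exists_chain_extension (m + 1) h hB t ht0 htI htC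
    refine ⟨Function.update t (m + 2) z, ?_, ?_, fun i hi => ?_, fun i hi => ?_⟩
    · rw [Function.update_of_ne (by omega), ht0]
    · rw [Function.update_of_ne (by omega), ht1]
    · by_cases him : i = m + 1 + 1
      · subst him
        simpa using hz
      · rw [Function.update_of_ne him]
        exact htI i (by omega)
    · rw [Function.update_of_ne (by omega)]
      by_cases him : i = m + 1
      · subst him
        simpa using hz'
      · rw [Function.update_of_ne (by omega)]
        exact htC i (by omega)

theorem IndecSextuple.eq_zero_of_mem_one_two (h : IndecSextuple I C) (hB : SymmCompatible B I C)
    {s : V} (hs : s ∈ I 1) (hs' : s ∈ C 2) : s = 0 := by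
  obtain ⟨x, hx0, hx1, hxI, hxC⟩ := h.exists_chain hB hs hs' (3 * Module.finrank k V + 1)
  obtain ⟨α, J, hJ, hαJ, hrel⟩ := exists_relation (k := k) fun j => x (1 + 3 * j)
  obtain ⟨c, hc⟩ : ∃ c : ℕ → V, ∀ i, c i =
      ∑ j ∈ Finset.range (J + 1), α j • x (i - 3 * (J - j)) := ⟨_, fun _ => rfl⟩
  have h3 : (3 : ZMod 3) = 0 := rfl
  have hcast : ∀ i r : ℕ, 3 * r ≤ i → ((i - 3 * r : ℕ) : ZMod 3) = i := fun i r hi => by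
    rw [Nat.cast_sub hi, Nat.cast_mul, Nat.cast_ofNat, h3, zero_mul, sub_zero]
  have hcI : ∀ i, i ≤ 3 * J → c i ∈ I i := by
    intro i hi
    rw [hc]
    refine Submodule.sum_mem _ fun j _ => Submodule.smul_mem _ _ ?_
    rcases le_or_gt (3 * (J - j)) i with hij | hij
    · have := hxI (i - 3 * (J - j)) (by omega)
      rwa [hcast _ _ hij] at this
    · rw [Nat.sub_eq_zero_of_le hij.le, hx0]
      exact Submodule.zero_mem _
  have hcC : ∀ i, i ≤ 3 * J → c i - c (i + 1) ∈ C (i + 2) := by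
    intro i hi
    rw [hc, hc, ← Finset.sum_sub_distrib]
    refine Submodule.sum_mem _ fun j _ => ?_
    rw [← smul_sub]
    refine Submodule.smul_mem _ _ ?_
    rcases le_or_gt (3 * (J - j)) i with hij | hij
    · have := hxC (i - 3 * (J - j)) (by omega)
      rwa [hcast _ _ hij, ← Nat.sub_add_comm hij] at this
    · rw [Nat.sub_eq_zero_of_le hij.le, Nat.sub_eq_zero_of_le hij, sub_self]
      exact Submodule.zero_mem _
  have hclast : c (3 * J + 1) = 0 := by
    rw [hc, ← hrel]
    refine Finset.sum_congr rfl fun j hj => ?_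
    rw [Finset.mem_range] at hj
    rw [(by omega : 3 * J + 1 - 3 * (J - j) = 1 + 3 * j)]
  have hkey := IndecSextuple.chain_eq_zero (3 * J + 1) h hB.sum_finrank
    (fun i => if i ≤ 3 * J then c i else 0) (by simp [hc, hx0])
    (fun i hi => by rw [if_neg (by omega)])
    (fun i => by
      split_ifs with hi
      · exact hcI i hi
      · exact Submodule.zero_mem _)
    (fun i => by
      rcases lt_trichotomy i (3 * J) with hi | rfl | hi
      · rw [if_pos (by omega), if_pos (by omega)]
        exact hcC i hi.le
      · rw [if_pos le_rfl, if_neg (by omega)]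
        have := hcC (3 * J) le_rfl
        rwa [hclast] at this
      · rw [if_neg (by omega), if_neg (by omega), sub_zero]
        exact Submodule.zero_mem _) 1
  have hc1 : c 1 = 0 := by
    rcases Nat.eq_zero_or_pos J with rfl | hJ0
    · exact hclast
    · simpa [if_pos (by omega : 1 ≤ 3 * J)] using hkey
  rw [hc, Finset.sum_range_succ, Finset.sum_eq_zero, zero_add] at hc1
  · simpa [hx1, hαJ] using hc1
  · intro j hj
    rw [Finset.mem_range] at hj
    rw [Nat.sub_eq_zero_of_le (by omega), hx0, smul_zero]

theorem IndecSextuple.eq_zero_of_mem (h : IndecSextuple I C) (hB : SymmCompatible B I C)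
    {i j : ZMod 3} (hij : i ≠ j) {x : V} (hi : x ∈ I i) (hj : x ∈ C j) : x = 0 := by
  rcases (by decide : ∀ i j : ZMod 3, i ≠ j → 2 + (i - 1) = j ∨ i + 1 - 2 = j)
    i j hij with rfl | rfl
  · exact (h.comp_equiv (Equiv.addRight (i - 1))).eq_zero_of_mem_one_two
      (hB.comp_equiv (Equiv.addRight (i - 1))) (by simpa using hi) (by simpa using hj)
  · exact (h.comp_equiv (Equiv.subLeft (i + 1))).eq_zero_of_mem_one_two
      (hB.comp_equiv (Equiv.subLeft (i + 1))) (by simpa using hi) (by simpa using hj)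

theorem IndecSextuple.isCompl (h : IndecSextuple I C) (hB : SymmCompatible B I C)
    {i j : ZMod 3} (hij : i ≠ j) : IsCompl (I i) (C j) := by
  have hdis : ∀ {i j : ZMod 3}, i ≠ j → Disjoint (I i) (C j) := fun hij =>
    Submodule.disjoint_def.2 fun x hi hj => h.eq_zero_of_mem hB hij hi hj
  refine ⟨hdis hij, codisjoint_iff.2 ?_⟩
  have hle : ∀ {i j : ZMod 3}, i ≠ j →
      Module.finrank k (I i) + Module.finrank k (C j) ≤ Module.finrank k V := fun {i j} hij => by
    have := Submodule.finrank_sup_add_finrank_inf_eq (I i) (C j)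
    rw [(hdis hij).eq_bot, finrank_bot, add_zero] at this
    rw [← this]
    exact Submodule.finrank_le _
  apply Submodule.eq_top_of_finrank_eq
  have h1 := Submodule.finrank_sup_add_finrank_inf_eq (I i) (C j)
  rw [(hdis hij).eq_bot, finrank_bot, add_zero] at h1
  have h2 := hle hij.symm
  have h3 := hle hij
  have h4 := hB.finrank_add i
  have h5 := hB.finrank_add j
  omega

end Transversality

section Nilpotent

variable {k X : Type*} [Field k] [AddCommGroup X] [Module k X]

theorem subsingleton_of_isNilpotent_of_injective {f : X →ₗ[k] X} (hf : IsNilpotent f)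
    (hinj : Function.Injective f) : Subsingleton X := by
  obtain ⟨n, hn⟩ := hf
  refine ⟨fun x y => Module.End.iterate_injective hinj n ?_⟩
  rw [hn]
  rfl

theorem bijective_add_smul_one_of_isNilpotent {f : X →ₗ[k] X} (hf : IsNilpotent f) {c : k}
    (hc : c ≠ 0) : Function.Bijective (f + c • (1 : Module.End k X)) := by
  have hu : IsUnit (c • (1 : Module.End k X)) := by
    rw [← Algebra.algebraMap_eq_smul_one]
    exact (isUnit_iff_ne_zero.2 hc).map (algebraMap k (Module.End k X))
  exact (Module.End.isUnit_iff _).1 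
    (hf.isUnit_add_right_of_commute hu ((Commute.one_right f).smul_right c))

/-- A nilpotent operator `ν` which is homogeneous with respect to an involution `σ` and whose
homogeneous centralizer contains only nilpotent and invertible operators is a single Jordan block
with homogeneous generator. -/
theorem exists_generator_of_isNilpotent [Nontrivial X] (h2 : (2 : k) ≠ 0) {ν σ : X →ₗ[k] X}
    (hν : IsNilpotent ν) {δ : k} (hδ : δ * δ = 1) (hσ : ∀ z, σ (σ z) = z)
    (hσν : ∀ z, σ (ν z) = δ • ν (σ z))
    (H : ∀ e : X →ₗ[k] X, (∀ z, e (ν z) = ν (e z)) → (∀ z, e (σ z) = σ (e z)) →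
      IsNilpotent e ∨ Function.Bijective e) :
    ∃ x, (σ x = x ∨ σ x = -x) ∧ ∀ z, ∃ (c : k) (y : X), z = c • x + ν y := by
  obtain ⟨m, hm0, hm1⟩ : ∃ m, ν ^ m ≠ 0 ∧ ν ^ (m + 1) = 0 := by
    classical
    have hpos : Nat.find hν ≠ 0 := by
      intro h0
      have h1 := Nat.find_spec hν
      rw [h0, pow_zero] at h1
      obtain ⟨x, hx⟩ := exists_ne (0 : X)
      exact hx (LinearMap.congr_fun h1 x)
    obtain ⟨m, hm⟩ := Nat.exists_eq_succ_of_ne_zero hpos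
    exact ⟨m, Nat.find_min hν (by omega), by
      rw [← Nat.succ_eq_add_one, ← hm]; exact Nat.find_spec hν⟩
  have hbig : ∀ r, m + 1 ≤ r → ∀ z, (ν ^ r) z = 0 := by
    intro r hr z
    obtain ⟨q, rfl⟩ := Nat.exists_eq_add_of_le' hr
    rw [pow_add, hm1, mul_zero, LinearMap.zero_apply]
  have hpow : ∀ r z, σ ((ν ^ r) z) = δ ^ r • (ν ^ r) (σ z) := by
    intro r
    induction r with
    | zero => simp
    | succ r ih =>
      intro z
      rw [pow_succ', Module.End.mul_apply, hσν, ih, map_smul, smul_smul, ← pow_succ',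
        Module.End.mul_apply]
  obtain ⟨x, ε, hε, hεx, hx, hxm⟩ : ∃ (x : X) (ε : k), ε * ε = 1 ∧ (σ x = x ∨ σ x = -x) ∧
      σ x = ε • x ∧ (ν ^ m) x ≠ 0 := by
    obtain ⟨z, hz⟩ : ∃ z, (ν ^ m) z ≠ 0 := by
      by_contra! hcon
      exact hm0 (LinearMap.ext hcon)
    by_cases h1 : (ν ^ m) (z + σ z) = 0
    · have h3 : σ (z - σ z) = -(z - σ z) := by rw [map_sub, hσ, neg_sub]
      refine ⟨z - σ z, -1, by ring, Or.inr h3, by rw [h3, neg_one_smul], fun h4 => hz ?_⟩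
      have h5 : (2 : k) • (ν ^ m) z = 0 := by
        rw [← map_smul, (by module : (2 : k) • z = (z + σ z) + (z - σ z)), map_add, h1, h4,
          add_zero]
      exact (smul_eq_zero.1 h5).resolve_left h2
    · have h3 : σ (z + σ z) = z + σ z := by rw [map_add, hσ, add_comm]
      exact ⟨z + σ z, 1, by ring, Or.inl h3, by rw [h3, one_smul], h1⟩
  obtain ⟨ε', hε'⟩ : ∃ ε', ε' = δ ^ m * ε := ⟨_, rfl⟩
  have hδ2 : ∀ r, δ ^ r * δ ^ r = 1 := fun r => by rw [← mul_pow, hδ, one_pow]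
  have hε'2 : ε' * ε' = 1 := by
    rw [hε', mul_mul_mul_comm, hδ2, hε, one_mul]
  have hx' : σ ((ν ^ m) x) = ε' • (ν ^ m) x := by
    rw [hpow, hx, map_smul, smul_smul, hε']
  obtain ⟨ξ, hξσ, hξx⟩ : ∃ ξ : Module.Dual k X, (∀ z, ξ (σ z) = ε' * ξ z) ∧ ξ ((ν ^ m) x) = 2 := by
    obtain ⟨ξ₀, hξ₀⟩ := Module.Projective.exists_dual_eq_one k hxm
    refine ⟨ξ₀ + ε' • (ξ₀ ∘ₗ σ), fun z => ?_, ?_⟩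
    · simp only [LinearMap.add_apply, LinearMap.smul_apply, LinearMap.comp_apply, hσ, smul_eq_mul]
      linear_combination (- ξ₀ (σ z)) * hε'2
    · simp only [LinearMap.add_apply, LinearMap.smul_apply, LinearMap.comp_apply, hx', map_smul,
        smul_eq_mul, hξ₀]
      linear_combination hε'2
  obtain ⟨e, he⟩ : ∃ e : X →ₗ[k] X, ∀ z, e z =
      ∑ i ∈ Finset.range (m + 1), ξ ((ν ^ (m - i)) z) • (ν ^ i) x :=
    ⟨∑ i ∈ Finset.range (m + 1), (ξ ∘ₗ (ν ^ (m - i))).smulRight ((ν ^ i) x), fun z => by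
      simp [LinearMap.sum_apply]⟩
  have hcom : ∀ z, e (ν z) = ν (e z) := by
    intro z
    rw [he, he, map_sum, Finset.sum_range_succ', Finset.sum_range_succ]
    have h1 : ξ ((ν ^ (m - 0)) (ν z)) • (ν ^ 0) x = 0 := by
      rw [← Module.End.mul_apply, ← pow_succ, hbig (m - 0 + 1) (by omega), map_zero, zero_smul]
    have h3 : ν (ξ ((ν ^ (m - m)) z) • (ν ^ m) x) = 0 := by
      rw [map_smul, ← Module.End.mul_apply, ← pow_succ', hbig (m + 1) le_rfl, smul_zero]
    rw [h1, h3, add_zero, add_zero]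
    refine Finset.sum_congr rfl fun i hi => ?_
    rw [Finset.mem_range] at hi
    rw [map_smul, ← Module.End.mul_apply, ← Module.End.mul_apply ν, ← pow_succ, ← pow_succ',
      (by omega : m - (i + 1) + 1 = m - i)]
  have hcomσ : ∀ z, e (σ z) = σ (e z) := by
    intro z
    rw [he, he, map_sum]
    refine Finset.sum_congr rfl fun i hi => ?_
    rw [Finset.mem_range] at hi
    have h1 : ξ ((ν ^ (m - i)) (σ z)) = δ ^ (m - i) * ε' * ξ ((ν ^ (m - i)) z) := by
      have h3 := congrArg (fun y => δ ^ (m - i) * ξ y) (hpow (m - i) z)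
      simp only [map_smul, smul_eq_mul, hξσ] at h3
      linear_combination (-ξ ((ν ^ (m - i)) (σ z))) * hδ2 (m - i) - h3
    have h4 : δ ^ (m - i) * ε' = δ ^ i * ε := by
      have h5 : δ ^ m = δ ^ (m - i) * δ ^ i := by
        rw [← pow_add, (by omega : m - i + i = m)]
      rw [hε', h5]
      linear_combination (δ ^ i * ε) * hδ2 (m - i)
    rw [map_smul, hpow, hx, map_smul, h1, h4, smul_smul, smul_smul]
    congr 1
    ring
  have hχ : ∀ z, ξ ((ν ^ m) (e z)) = 2 * ξ ((ν ^ m) z) := by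
    intro z
    rw [he, map_sum, map_sum, Finset.sum_range_succ', Finset.sum_eq_zero, zero_add]
    · simp [hξx, mul_comm]
    · intro i _
      rw [map_smul, ← Module.End.mul_apply, ← pow_add, hbig (m + (i + 1)) (by omega), smul_zero,
        map_zero]
  refine ⟨x, hεx, ?_⟩
  rcases H e hcom hcomσ with ⟨n, hn⟩ | hbij
  · have h1 : ∀ r z, ξ ((ν ^ m) ((e ^ r) z)) = 2 ^ r * ξ ((ν ^ m) z) := by
      intro r
      induction r with
      | zero => simp
      | succ r ih =>
        intro z
        rw [pow_succ', Module.End.mul_apply, hχ, ih]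
        ring
    have h3 := h1 n x
    rw [hn, hξx, LinearMap.zero_apply, map_zero, map_zero] at h3
    exact absurd h3.symm (mul_ne_zero (pow_ne_zero _ h2) h2)
  · intro z
    obtain ⟨y, rfl⟩ := hbij.2 z
    refine ⟨ξ ((ν ^ m) y), ∑ i ∈ Finset.range m, ξ ((ν ^ (m - (i + 1))) y) • (ν ^ i) x, ?_⟩
    rw [he, Finset.sum_range_succ', map_sum, add_comm]
    simp only [map_smul, ← Module.End.mul_apply, ← pow_succ']
    simp

end Nilpotent

section Parity

variable {k U : Type*} [Field k] [AddCommGroup U] [Module k U] [FiniteDimensional k U]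

theorem even_finrank_of_skew (h2 : (2 : k) ≠ 0) (ω : LinearMap.BilinForm k U)
    (hω : ∀ x y, ω x y = -ω y x) (hnd : ∀ x, (∀ y, ω x y = 0) → x = 0) :
    Even (Module.finrank k U) := by
  classical
  let b := Module.finBasis k U
  have hdet : (LinearMap.BilinForm.toMatrix b ω).det ≠ 0 :=
    (LinearMap.BilinForm.nondegenerate_iff_det_ne_zero b).1 (.ofSeparatingLeft hnd)
  have hskew : (LinearMap.BilinForm.toMatrix b ω).transpose =
      -LinearMap.BilinForm.toMatrix b ω := by
    ext i j
    simp only [Matrix.transpose_apply, Matrix.neg_apply, LinearMap.BilinForm.toMatrix_apply]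
    exact hω _ _
  by_contra hodd
  have h1 := congrArg Matrix.det hskew
  rw [Matrix.det_transpose, Matrix.det_neg, Fintype.card_fin,
    (Nat.not_even_iff_odd.1 hodd).neg_one_pow] at h1
  exact mul_ne_zero h2 hdet (by linear_combination h1)

theorem eq_zero_of_skew_of_even_finrank (h2 : (2 : k) ≠ 0) (ω : LinearMap.BilinForm k U)
    (hω : ∀ x y, ω x y = -ω y x) (heven : Even (Module.finrank k U)) (φ : Module.Dual k U)
    (hφ : ∀ u, (∀ v, ω u v = 0) → φ u = 0 → u = 0) {r : U} (hr : ∀ v, ω r v = 0) : r = 0 := by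
  refine hφ r hr ?_
  by_contra hφr
  let ω' : LinearMap.BilinForm k (U × k) := LinearMap.mk₂ k
    (fun p q => ω p.1 q.1 + (p.2 * φ q.1 - q.2 * φ p.1))
    (fun p p' q => by simp; ring) (fun c p q => by simp; ring)
    (fun p q q' => by simp; ring) (fun c p q => by simp; ring)
  have hω' : ∀ p q, ω' p q = ω p.1 q.1 + (p.2 * φ q.1 - q.2 * φ p.1) := fun _ _ => rfl
  have key := even_finrank_of_skew h2 ω' (fun p q => by rw [hω', hω', hω p.1 q.1]; ring) ?_
  · rw [Module.finrank_prod, Module.finrank_self, Nat.even_add_one] at key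
    exact key heven
  · rintro ⟨u, c⟩ hu
    have h1 : φ u = 0 := by simpa [hω'] using hu (0, 1)
    have h3 : c = 0 := by
      have := hu (r, 0)
      simp only [hω', hω u r, hr] at this
      simpa [hφr] using this
    have h4 : u = 0 := hφ u (fun v => by simpa [hω', h1, h3] using hu (v, 0)) h1
    rw [h3, h4]
    rfl

end Parity

section Pair

variable {k W : Type*} [Field k] [AddCommGroup W] [Module k W]

theorem eq_zero_of_eq_neg_of_two_ne_zero (h2 : (2 : k) ≠ 0) {w : W} (hw : w = -w) : w = 0 := by
  refine (smul_eq_zero.1 (?_ : (2 : k) • w = 0)).resolve_left h2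
  rw [two_smul]
  nth_rewrite 1 [hw]
  exact neg_add_cancel w

variable {U : Type*} [AddCommGroup U] [Module k U]

theorem prodMap_pow_eq (α : W →ₗ[k] W) (γ : U →ₗ[k] U) (n : ℕ) :
    LinearMap.prodMap α γ ^ n = LinearMap.prodMap (α ^ n) (γ ^ n) := by
  induction n with
  | zero => rfl
  | succ n ih => rw [pow_succ, ih, pow_succ, pow_succ, LinearMap.prodMap_mul]

theorem exists_generator_of_pair [Nontrivial (W × U)] (h2 : (2 : k) ≠ 0) (a : W →ₗ[k] U)
    (b : U →ₗ[k] W) (hR : IsNilpotent (b ∘ₗ a : Module.End k W))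
    (hN : IsNilpotent (a ∘ₗ b : Module.End k U))
    (H : ∀ (α : W →ₗ[k] W) (γ : U →ₗ[k] U), (∀ w, a (α w) = γ (a w)) →
      (∀ u, α (b u) = b (γ u)) → (IsNilpotent α ∧ IsNilpotent γ) ∨
        (Function.Bijective α ∧ Function.Bijective γ)) :
    ∃ (w₀ : W) (u₀ : U), (∀ u, ∃ (c : k) (v : U), u = c • u₀ + a (b v)) ∧
      ∀ w, ∃ (c : k) (v : U), w = c • w₀ + b v := by
  obtain ⟨ν, hν⟩ : ∃ ν : W × U →ₗ[k] W × U, ∀ p, ν p = (b p.2, a p.1) :=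
    ⟨(b ∘ₗ LinearMap.snd k W U).prod (a ∘ₗ LinearMap.fst k W U), fun _ => rfl⟩
  obtain ⟨σ, hσ⟩ : ∃ σ : W × U →ₗ[k] W × U, ∀ p, σ p = (p.1, -p.2) :=
    ⟨(LinearMap.fst k W U).prod (-LinearMap.snd k W U), fun _ => rfl⟩
  have hνnil : IsNilpotent ν := by
    obtain ⟨m, hm⟩ := hR
    obtain ⟨n, hn⟩ := hN
    have hsq : ν ^ 2 = LinearMap.prodMap (b ∘ₗ a) (a ∘ₗ b) := by
      rw [pow_two]
      refine LinearMap.ext fun p => ?_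
      rw [Module.End.mul_apply, hν, hν]
      rfl
    refine ⟨2 * (m + n), ?_⟩
    rw [pow_mul, hsq, prodMap_pow_eq, pow_add, pow_add, hm, hn, zero_mul, mul_zero]
    rfl
  obtain ⟨x, hx, hgen⟩ := exists_generator_of_isNilpotent h2 hνnil (δ := -1) (σ := σ) (by ring)
    (fun z => by simp [hσ]) (fun z => by simp [hσ, hν]) (by
      intro e heν heσ
      obtain ⟨α, hα⟩ : ∃ α : W →ₗ[k] W, ∀ w, α w = (e (w, 0)).1 :=
        ⟨LinearMap.fst k W U ∘ₗ e ∘ₗ LinearMap.inl k W U, fun _ => rfl⟩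
      obtain ⟨γ, hγ⟩ : ∃ γ : U →ₗ[k] U, ∀ u, γ u = (e (0, u)).2 :=
        ⟨LinearMap.snd k W U ∘ₗ e ∘ₗ LinearMap.inr k W U, fun _ => rfl⟩
      have h1 : ∀ w, e (w, 0) = (α w, 0) := fun w => by
        have h3 := congrArg Prod.snd (heσ (w, 0))
        rw [hσ, hσ, neg_zero] at h3
        exact Prod.ext (hα w).symm (eq_zero_of_eq_neg_of_two_ne_zero h2 h3)
      have h3 : ∀ u, e (0, u) = (0, γ u) := fun u => by
        have h4 := congrArg Prod.fst (heσ (0, u))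
        rw [hσ, hσ, (by simp : ((0 : W), -u) = -(0, u)), map_neg] at h4
        exact Prod.ext (eq_zero_of_eq_neg_of_two_ne_zero h2 h4.symm) (hγ u).symm
      have he : e = LinearMap.prodMap α γ := by
        refine LinearMap.ext fun p => ?_
        rw [(by simp : p = (p.1, 0) + (0, p.2)), map_add, h1, h3]
        simp
      have h5 : ∀ w, a (α w) = γ (a w) := fun w => by
        have := congrArg Prod.snd (heν (w, 0))
        simpa [hν, he] using this.symm
      have h6 : ∀ u, α (b u) = b (γ u) := fun u => by
        have := congrArg Prod.fst (heν (0, u))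
        simpa [hν, he] using this
      rcases H α γ h5 h6 with ⟨⟨m, hm⟩, n, hn⟩ | ⟨hαb, hγb⟩
      · left
        refine ⟨m + n, ?_⟩
        rw [he, prodMap_pow_eq, pow_add, pow_add, hm, hn, zero_mul, mul_zero]
        rfl
      · right
        rw [he]
        exact hαb.prodMap hγb)
  have hgenW : ∀ w, ∃ (c : k) (v : U), w = c • x.1 + b v := fun w => by
    obtain ⟨c, y, hy⟩ := hgen (w, 0)
    exact ⟨c, y.2, by simpa [hν] using congrArg Prod.fst hy⟩
  have hgenU : ∀ u, ∃ (c : k) (w : W), u = c • x.2 + a w := fun u => by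
    obtain ⟨c, y, hy⟩ := hgen (0, u)
    exact ⟨c, y.1, by simpa [hν] using congrArg Prod.snd hy⟩
  rcases hx with hx | hx
  · refine ⟨x.1, a x.1, fun u => ?_, hgenW⟩
    have hx0 : x.2 = 0 := eq_zero_of_eq_neg_of_two_ne_zero h2
      (by simpa [hσ] using (congrArg Prod.snd hx).symm)
    obtain ⟨c, w, rfl⟩ := hgenU u
    obtain ⟨d, v, rfl⟩ := hgenW w
    exact ⟨d, v, by simp [hx0]⟩
  · refine ⟨x.1, x.2, fun u => ?_, hgenW⟩
    have hx0 : x.1 = 0 := eq_zero_of_eq_neg_of_two_ne_zero h2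
      (by simpa [hσ] using (congrArg Prod.fst hx))
    obtain ⟨c, w, rfl⟩ := hgenU u
    obtain ⟨d, v, rfl⟩ := hgenW w
    exact ⟨c, v, by simp [hx0]⟩

variable [FiniteDimensional k U]

theorem subsingleton_of_skew_relations (h2 : (2 : k) ≠ 0) (a : W →ₗ[k] U) (b : U →ₗ[k] W)
    (β : LinearMap.BilinForm k W) (s : LinearMap.BilinForm k U) (hs : ∀ u v, s u v = s v u)
    (hsn : ∀ u, (∀ v, s u v = 0) → u = 0) (hβ : ∀ w, (∀ x, β w x = 0) → w = 0)
    (hsβ : ∀ w u, s (a w) u = β (b u) w) (hββ : ∀ w x, β w x + β x w + s (a w) (a x) = 0)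
    (H : ∀ (α : W →ₗ[k] W) (γ : U →ₗ[k] U), (∀ w, a (α w) = γ (a w)) →
      (∀ u, α (b u) = b (γ u)) → (IsNilpotent α ∧ IsNilpotent γ) ∨
        (Function.Bijective α ∧ Function.Bijective γ))
    (heven : Even (Module.finrank k U))
    (hD : Nontrivial U → ∃ u, u ≠ 0 ∧ ∀ v, s (a (b u)) v = s u (a (b v))) :
    Subsingleton W ∧ Subsingleton U := by
  have hS : ∀ u v, s u (a (b v)) + s v (a (b u)) + s (a (b u)) (a (b v)) = 0 := fun u v => by
    have h1 := hββ (b u) (b v)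
    rwa [← hsβ, ← hsβ, hs _ u, hs _ v] at h1
  obtain ⟨ω, hω⟩ : ∃ ω : LinearMap.BilinForm k U, ∀ u v,
      ω u v = s (a (b u)) v - s u (a (b v)) :=
    ⟨s.compl₁₂ (a ∘ₗ b) LinearMap.id - s.compl₁₂ LinearMap.id (a ∘ₗ b), fun _ _ => rfl⟩
  have hωskew : ∀ u v, ω u v = -ω v u := fun u v => by
    rw [hω, hω, hs (a (b u)) v, hs u (a (b v))]
    ring
  have hωN : ∀ u v, ω u (v + a (b v)) = -s u (a (b (a (b v))) + (2 : k) • a (b v)) := fun u v => by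
    simp only [hω, map_add, map_smul, smul_eq_mul]
    rw [hs (a (b u)) v]
    linear_combination hS u v
  have hWU : Function.Bijective (b ∘ₗ a) → Subsingleton U → Subsingleton W := fun hb hU =>
    ⟨fun x y => hb.1 (congrArg b (Subsingleton.elim (a x) (a y)))⟩
  rcases H (b ∘ₗ a) (a ∘ₗ b) (fun _ => rfl) (fun _ => rfl) with ⟨hR, hN⟩ | ⟨hR, hN⟩
  · rcases subsingleton_or_nontrivial (W × U) with hWU0 | _
    · exact ⟨⟨fun x y => congrArg Prod.fst (Subsingleton.elim (x, (0 : U)) (y, 0))⟩,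
        ⟨fun x y => congrArg Prod.snd (Subsingleton.elim ((0 : W), x) (0, y))⟩⟩
    obtain ⟨w₀, u₀, hu₀, hw₀⟩ := exists_generator_of_pair h2 a b hR hN H
    have hrad : ∀ u, (∀ v, ω u v = 0) → s u u₀ = 0 → u = 0 := fun u hu hu' => by
      refine hsn u fun v => ?_
      obtain ⟨c, y, rfl⟩ := hu₀ v
      obtain ⟨z, rfl⟩ := (bijective_add_smul_one_of_isNilpotent hN h2).2 y
      have h1 := hωN u z
      rw [hu, eq_comm, neg_eq_zero] at h1
      simpa [hu'] using h1
    have hU : Subsingleton U := by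
      refine subsingleton_of_isNilpotent_of_injective hN
        ((injective_iff_map_eq_zero (a ∘ₗ b)).2 fun u hu => ?_)
      replace hu : a (b u) = 0 := hu
      refine eq_zero_of_skew_of_even_finrank h2 ω hωskew heven (s.flip u₀) hrad fun v => ?_
      have h1 := hS u v
      rw [hu, map_zero, map_zero, LinearMap.zero_apply, add_zero, add_zero] at h1
      rw [hω, hu, map_zero, LinearMap.zero_apply, h1, sub_zero]
    refine ⟨?_, hU⟩
    have hw : ∀ w, ∃ c : k, w = c • w₀ := fun w => by
      obtain ⟨c, v, hv⟩ := hw₀ w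
      exact ⟨c, by rw [hv, Subsingleton.elim v 0, map_zero, add_zero]⟩
    have h1 : w₀ = 0 := hβ w₀ fun w => by
      obtain ⟨c, rfl⟩ := hw w
      have h3 := hββ w₀ w₀
      rw [Subsingleton.elim (a w₀) 0, map_zero, add_zero, ← two_mul] at h3
      rw [map_smul, (mul_eq_zero.1 h3).resolve_left h2, smul_zero]
    refine subsingleton_of_forall_eq 0 fun w => ?_
    obtain ⟨c, rfl⟩ := hw w
    rw [h1, smul_zero]
  · suffices hU : Subsingleton U from ⟨hWU hR hU, hU⟩
    rw [← not_nontrivial_iff_subsingleton]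
    intro hU
    rcases H (b ∘ₗ a + (2 : k) • (1 : Module.End k W)) (a ∘ₗ b + (2 : k) • (1 : Module.End k U))
      (fun w => by simp) (fun u => by simp) with ⟨-, hN'⟩ | ⟨-, hN'⟩
    · have ha : Function.Bijective a := ⟨Function.Injective.of_comp hR.1,
        Function.Surjective.of_comp hN.2⟩
      obtain ⟨a', ha'⟩ : ∃ a' : W ≃ₗ[k] U, ∀ w, a' w = a w :=
        ⟨LinearEquiv.ofBijective a ha, fun _ => rfl⟩
      obtain ⟨u₀, -, hu₀⟩ := exists_generator_of_isNilpotent h2 hN' (δ := 1)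
        (σ := LinearMap.id) (by ring) (fun z => rfl) (fun z => by simp) (by
          intro e he _
          have he' : ∀ z, e (a (b z)) = a (b (e z)) := fun z => by
            have := he z
            simpa using this
          rcases H (a'.symm.toLinearMap ∘ₗ e ∘ₗ a) e (fun w => by simp [← ha'])
            (fun u => by simp [he', LinearEquiv.symm_apply_eq, ha']) with h1 | h1
          · exact Or.inl h1.2
          · exact Or.inr h1.2)
      have hrad : ∀ u, (∀ v, ω u v = 0) → s u u₀ = 0 → u = 0 := fun u hu hu' => by
        refine hsn u fun v => ?_
        obtain ⟨c, y, rfl⟩ := hu₀ v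
        obtain ⟨z, rfl⟩ := hN.2 y
        have h1 := hωN u z
        rw [hu, eq_comm, neg_eq_zero] at h1
        simpa [hu'] using h1
      refine not_subsingleton U (subsingleton_of_isNilpotent_of_injective hN'
        ((injective_iff_map_eq_zero _).2 fun u hu => ?_))
      replace hu : a (b u) = -((2 : k) • u) := eq_neg_of_add_eq_zero_left hu
      refine eq_zero_of_skew_of_even_finrank h2 ω hωskew heven (s.flip u₀) hrad fun v => ?_
      have h1 := hS u v
      simp only [hu, map_neg, map_smul, LinearMap.neg_apply, LinearMap.smul_apply,
        smul_eq_mul] at h1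
      simp only [hω, hu, map_neg, map_smul, LinearMap.neg_apply, LinearMap.smul_apply,
        smul_eq_mul]
      linear_combination h1 + 2 * hs v u
    · obtain ⟨u, hu0, hu⟩ := hD hU
      refine hu0 (hsn u fun v => ?_)
      obtain ⟨y, rfl⟩ := hN'.2 v
      obtain ⟨z, rfl⟩ := hN.2 y
      have h1 := hωN u z
      rw [hω, hu, sub_self, eq_comm, neg_eq_zero] at h1
      exact h1

end Pair

section Coordinates

variable {k V : Type*} [Field k] [AddCommGroup V] [Module k V] {I C : ZMod 3 → Submodule k V}

/-- Coordinates for a sextuple in which `I i` and `C j` are complementary for all `i ≠ j`: the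
space is identified with `I 1 × I 1 × (C 1 ⊓ C 2)` and the sextuple is determined by the pair of
maps `a`, `b`. -/
structure SextupleCoordinates (I C : ZMod 3 → Submodule k V) where
  /-- Identification of `I 1` with `I 2`. -/
  ψ : I 1 →ₗ[k] V
  /-- The map describing `I 0`. -/
  a : I 1 →ₗ[k] ↥(C 1 ⊓ C 2)
  /-- The map describing `C 0`. -/
  b : ↥(C 1 ⊓ C 2) →ₗ[k] I 1
  /-- The identification of the whole space. -/
  Φ : (I 1 × I 1 × ↥(C 1 ⊓ C 2)) ≃ₗ[k] V
  Φ_apply : ∀ p, Φ p = p.1 + ψ p.2.1 + p.2.2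
  ψ_mem : ∀ w, ψ w ∈ I 2
  exists_ψ : ∀ r ∈ I 2, ∃ w, ψ w = r
  graph_mem : ∀ w, Φ (w, w, a w) ∈ I 0
  exists_graph : ∀ x ∈ I 0, ∃ w, Φ (w, w, a w) = x
  sub_mem : ∀ u, Φ (-b u, 0, u) ∈ C 0
  exists_sub : ∀ x ∈ C 0, ∃ w u, Φ (w, w, a w) + Φ (-b u, 0, u) = x
  exists_one : ∀ x ∈ C 1, ∃ w u, Φ (w, 0, u) = x
  exists_two : ∀ x ∈ C 2, ∃ w u, Φ (0, w, u) = x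

theorem exists_projection {P Q : Submodule k V} (hPQ : IsCompl P Q) :
    ∃ t : V →ₗ[k] V, ∀ v, t v ∈ P ∧ v - t v ∈ Q := by
  refine ⟨P.projection Q hPQ, fun v => ⟨Submodule.projection_apply_mem hPQ v, ?_⟩⟩
  have h : v - P.projection Q hPQ v ∈ LinearMap.ker (P.projection Q hPQ) := by
    rw [LinearMap.mem_ker, map_sub, sub_eq_zero]
    exact (Submodule.projection_apply_left hPQ ⟨_, Submodule.projection_apply_mem hPQ v⟩).symm
  rwa [Submodule.ker_projection] at h

theorem nonempty_sextupleCoordinates (hIC : ∀ j, I j ≤ C j)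
    (hc : ∀ i j, i ≠ j → IsCompl (I i) (C j)) : Nonempty (SextupleCoordinates I C) := by
  have h0 : ∀ {i j : ZMod 3} {x : V}, i ≠ j → x ∈ I i → x ∈ C j → x = 0 := fun hij hi hj =>
    Submodule.disjoint_def.1 (hc _ _ hij).disjoint _ hi hj
  have hex : ∀ {i j : ZMod 3} (x : V), i ≠ j → ∃ y ∈ I i, x - y ∈ C j := fun x hij => by
    obtain ⟨t, ht⟩ := exists_projection (hc _ _ hij)
    exact ⟨t x, (ht x).1, (ht x).2⟩
  have n02 : (0 : ZMod 3) ≠ 2 := by decide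
  have n21 : (2 : ZMod 3) ≠ 1 := by decide
  have n10 : (1 : ZMod 3) ≠ 0 := by decide
  have n12 : (1 : ZMod 3) ≠ 2 := by decide
  have n01 : (0 : ZMod 3) ≠ 1 := by decide
  obtain ⟨t, ht⟩ := exists_projection (hc _ _ n02)
  obtain ⟨p, hp⟩ := exists_projection (hc _ _ n21)
  obtain ⟨q, hq⟩ := exists_projection (hc _ _ n10)
  have ht_eq : ∀ {x y : V}, y ∈ I 0 → x - y ∈ C 2 → t x = y := fun {x y} hy hxy => by
    refine sub_eq_zero.1 (h0 n02 ((I 0).sub_mem (ht x).1 hy) ?_)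
    convert (C 2).sub_mem hxy (ht x).2 using 1
    abel
  have hp_eq : ∀ {x y : V}, y ∈ I 2 → x - y ∈ C 1 → p x = y := fun {x y} hy hxy => by
    refine sub_eq_zero.1 (h0 n21 ((I 2).sub_mem (hp x).1 hy) ?_)
    convert (C 1).sub_mem hxy (hp x).2 using 1
    abel
  obtain ⟨ψ, hψ⟩ : ∃ ψ : I 1 →ₗ[k] V, ∀ w, ψ w = p (t w) := ⟨p ∘ₗ t ∘ₗ (I 1).subtype, fun _ => rfl⟩
  have hψ_mem : ∀ w, ψ w ∈ I 2 := fun w => by rw [hψ]; exact (hp _).1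
  have ha_mem : ∀ w : I 1, t w - w - ψ w ∈ C 1 ⊓ C 2 := fun w => by
    refine ⟨?_, ?_⟩
    · rw [sub_right_comm, hψ]
      exact (C 1).sub_mem (hp _).2 (hIC 1 w.2)
    · rw [← neg_sub (w : V)]
      exact (C 2).sub_mem ((C 2).neg_mem (ht w).2) (hIC 2 (hψ_mem w))
  obtain ⟨a, ha⟩ : ∃ a : I 1 →ₗ[k] ↥(C 1 ⊓ C 2), ∀ w, (a w : V) = t w - w - ψ w :=
    ⟨LinearMap.codRestrict _ (t ∘ₗ (I 1).subtype - (I 1).subtype - ψ) ha_mem, fun _ => rfl⟩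
  obtain ⟨b, hb⟩ : ∃ b : ↥(C 1 ⊓ C 2) →ₗ[k] I 1, ∀ u, (b u : V) = q u :=
    ⟨LinearMap.codRestrict _ (q ∘ₗ (C 1 ⊓ C 2).subtype) fun u => (hq _).1, fun _ => rfl⟩
  have hψ_inj : ∀ w, ψ w = 0 → w = 0 := fun w hw => by
    have h1 : t w = 0 := by
      refine h0 n01 (ht w).1 ?_
      have := (hp (t w)).2
      rwa [← hψ, hw, sub_zero] at this
    have h3 := (ht w).2
    rw [h1, sub_zero] at h3
    exact Subtype.ext (h0 n12 w.2 h3)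
  have hψ_surj : ∀ r ∈ I 2, ∃ w, ψ w = r := fun r hr => by
    obtain ⟨y, hy, hry⟩ := hex r n01
    obtain ⟨w, hw, hyw⟩ := hex y n12
    refine ⟨⟨w, hw⟩, ?_⟩
    rw [hψ, ht_eq hy (by rw [← neg_sub]; exact (C 2).neg_mem hyw)]
    exact hp_eq hr (by rw [← neg_sub]; exact (C 1).neg_mem hry)
  obtain ⟨Φ₀, hΦ₀⟩ : ∃ Φ₀ : (I 1 × I 1 × ↥(C 1 ⊓ C 2)) →ₗ[k] V,
      ∀ p, Φ₀ p = p.1 + ψ p.2.1 + p.2.2 :=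
    ⟨(I 1).subtype.coprod (ψ.coprod (C 1 ⊓ C 2).subtype), fun p => by simp [add_assoc]⟩
  have hΦ_inj : Function.Injective Φ₀ := by
    rw [injective_iff_map_eq_zero]
    rintro ⟨w, w', u⟩ h
    rw [hΦ₀] at h
    have hw : w = 0 := Subtype.ext (h0 n12 w.2 (by
      rw [add_assoc] at h
      rw [eq_neg_of_add_eq_zero_left h]
      exact (C 2).neg_mem ((C 2).add_mem (hIC 2 (hψ_mem w')) u.2.2)))
    subst hw
    have hw' : w' = 0 := hψ_inj w' (h0 n21 (hψ_mem w') (by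
      rw [(by simpa using eq_neg_of_add_eq_zero_left h : ψ w' = -(u : V))]
      exact (C 1).neg_mem u.2.1))
    subst hw'
    simpa using h
  have hC2 : ∀ x ∈ C 2, ∃ w u, Φ₀ (0, w, u) = x := fun x hx => by
    obtain ⟨w, hw⟩ := hψ_surj (p x) (hp x).1
    refine ⟨w, ⟨x - p x, (hp x).2, (C 2).sub_mem hx (hIC 2 (hp x).1)⟩, ?_⟩
    simp [hΦ₀, hw]
  have hΦ_surj : Function.Surjective Φ₀ := fun x => by
    obtain ⟨y, hy, hxy⟩ := hex x n12
    obtain ⟨w, u, hwu⟩ := hC2 _ hxy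
    refine ⟨(⟨y, hy⟩, w, u), ?_⟩
    rw [hΦ₀] at hwu ⊢
    simp only [ZeroMemClass.coe_zero, zero_add] at hwu
    rw [add_assoc, hwu]
    abel
  have hgraph : ∀ w, Φ₀ (w, w, a w) = t w := fun w => by
    rw [hΦ₀, ha]
    abel
  have hsub : ∀ u, Φ₀ (-b u, 0, u) = u - q u := fun u => by
    rw [hΦ₀, ← hb]
    simp
    abel
  obtain ⟨Φ, hΦ⟩ : ∃ Φ : (I 1 × I 1 × ↥(C 1 ⊓ C 2)) ≃ₗ[k] V, ∀ p, Φ p = Φ₀ p :=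
    ⟨LinearEquiv.ofBijective Φ₀ ⟨hΦ_inj, hΦ_surj⟩, fun _ => rfl⟩
  simp only [← hΦ] at hΦ₀ hC2 hgraph hsub
  refine ⟨⟨ψ, a, b, Φ, hΦ₀, hψ_mem, hψ_surj, fun w => ?_, fun x hx => ?_, fun u => ?_,
    fun x hx => ?_, fun x hx => ?_, hC2⟩⟩
  · rw [hgraph]
    exact (ht w).1
  · obtain ⟨w, hw, hxw⟩ := hex x n12
    refine ⟨⟨w, hw⟩, ?_⟩
    rw [hgraph]
    exact ht_eq hx (by rw [← neg_sub]; exact (C 2).neg_mem hxw)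
  · rw [hsub]
    exact (hq u).2
  · obtain ⟨⟨w, w', u⟩, rfl⟩ := Φ.surjective x
    refine ⟨w', u - a w', ?_⟩
    have h1 : w - w' + b (u - a w') = 0 := by
      refine Subtype.ext (h0 n10 (Subtype.prop _) ?_)
      have h3 := (C 0).sub_mem ((C 0).sub_mem hx (hIC 0 (ht w').1)) (hq ↑(u - a w')).2
      rw [← hgraph, ← hsub, ← map_sub, ← map_sub] at h3
      convert h3 using 1
      rw [hΦ₀]
      simp
      abel
    have h3 : -b (u - a w') = w - w' := (neg_eq_of_add_eq_zero_left h1)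
    rw [← map_add, h3]
    simp
  · obtain ⟨⟨w, w', u⟩, rfl⟩ := Φ.surjective x
    have hw' : ψ w' = 0 := h0 n21 (hψ_mem w') (by
      have h1 := (C 1).sub_mem ((C 1).sub_mem hx (hIC 1 w.2)) u.2.1
      rw [hΦ₀] at h1
      convert h1 using 1
      simp only
      abel)
    refine ⟨w, u, ?_⟩
    rw [hψ_inj w' hw']

end Coordinates

section Symmetric

variable {k V : Type*} [Field k] [AddCommGroup V] [Module k V] {I C : ZMod 3 → Submodule k V}

/-- Compatible endomorphisms of the coordinate spaces extend to an endomorphism of the sextuple. -/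
theorem SextupleCoordinates.exists_stabilizes (S : SextupleCoordinates I C)
    (hIC : ∀ j, I j ≤ C j) {α : I 1 →ₗ[k] I 1}
    {γ : ↥(C 1 ⊓ C 2) →ₗ[k] ↥(C 1 ⊓ C 2)} (h1 : ∀ w, S.a (α w) = γ (S.a w))
    (h2 : ∀ u, α (S.b u) = S.b (γ u)) :
    ∃ f : V →ₗ[k] V, Stabilizes I C f ∧
      ∀ p, f (S.Φ p) = S.Φ (LinearMap.prodMap α (LinearMap.prodMap α γ) p) := by
  obtain ⟨f, hf⟩ : ∃ f : V →ₗ[k] V,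
      ∀ p, f (S.Φ p) = S.Φ (LinearMap.prodMap α (LinearMap.prodMap α γ) p) :=
    ⟨S.Φ.toLinearMap ∘ₗ LinearMap.prodMap α (LinearMap.prodMap α γ) ∘ₗ S.Φ.symm.toLinearMap,
      fun p => by simp⟩
  refine ⟨f, ?_, hf⟩
  simp only [LinearMap.prodMap_apply] at hf
  have hg : ∀ w, f (S.Φ (w, w, S.a w)) ∈ I 0 := fun w => by
    rw [hf, ← h1]
    exact S.graph_mem _
  have hu : ∀ w u, S.Φ (w, 0, u) ∈ C 1 := fun w u => by
    rw [S.Φ_apply, map_zero, add_zero]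
    exact (C 1).add_mem (hIC 1 w.2) u.2.1
  have hu' : ∀ w u, S.Φ (0, w, u) ∈ C 2 := fun w u => by
    rw [S.Φ_apply, ZeroMemClass.coe_zero, zero_add]
    exact (C 2).add_mem (hIC 2 (S.ψ_mem w)) u.2.2
  intro j
  rcases (by decide : ∀ j : ZMod 3, j = 0 ∨ j = 1 ∨ j = 2) j with rfl | rfl | rfl
  · refine ⟨fun x hx => ?_, fun x hx => ?_⟩
    · obtain ⟨w, rfl⟩ := S.exists_graph x hx
      exact hg w
    · obtain ⟨w, u, rfl⟩ := S.exists_sub x hx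
      rw [map_add]
      refine (C 0).add_mem (hIC 0 (hg w)) ?_
      rw [hf, map_neg, map_zero, h2]
      exact S.sub_mem _
  · refine ⟨fun x hx => ?_, fun x hx => ?_⟩
    · have := hf (⟨x, hx⟩, 0, 0)
      simp only [S.Φ_apply, map_zero, ZeroMemClass.coe_zero, add_zero] at this
      rw [this]
      exact Subtype.prop _
    · obtain ⟨w, u, rfl⟩ := S.exists_one x hx
      rw [hf, map_zero]
      exact hu _ _
  · refine ⟨fun x hx => ?_, fun x hx => ?_⟩
    · obtain ⟨w, rfl⟩ := S.exists_ψ x hx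
      have := hf (0, w, 0)
      simp only [S.Φ_apply, map_zero, ZeroMemClass.coe_zero, add_zero, zero_add] at this
      rw [this]
      exact S.ψ_mem _
    · obtain ⟨w, u, rfl⟩ := S.exists_two x hx
      rw [hf, map_zero]
      exact hu' _ _

variable [FiniteDimensional k V]

theorem SextupleCoordinates.isNilpotent_or_bijective (S : SextupleCoordinates I C)
    (h : IndecSextuple I C) {α : I 1 →ₗ[k] I 1} {γ : ↥(C 1 ⊓ C 2) →ₗ[k] ↥(C 1 ⊓ C 2)}
    (h1 : ∀ w, S.a (α w) = γ (S.a w)) (h2 : ∀ u, α (S.b u) = S.b (γ u)) :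
    (IsNilpotent α ∧ IsNilpotent γ) ∨ (Function.Bijective α ∧ Function.Bijective γ) := by
  obtain ⟨f, hf, hfΦ⟩ := S.exists_stabilizes h.le h1 h2
  rcases h.isNilpotent_or_bijective hf with ⟨n, hn⟩ | hb
  · left
    have hpow : ∀ m p, (f ^ m) (S.Φ p) =
        S.Φ ((LinearMap.prodMap α (LinearMap.prodMap α γ) ^ m) p) := by
      intro m
      induction m with
      | zero => exact fun _ => rfl
      | succ m ih =>
        intro p
        rw [pow_succ', Module.End.mul_apply, ih, hfΦ, pow_succ', Module.End.mul_apply]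
    have hz : ∀ p, (LinearMap.prodMap α (LinearMap.prodMap α γ) ^ n) p = 0 := fun p => by
      apply S.Φ.injective
      rw [← hpow, hn, map_zero]
      rfl
    simp only [prodMap_pow_eq] at hz
    exact ⟨⟨n, LinearMap.ext fun w => congrArg Prod.fst (hz (w, 0, 0))⟩,
      ⟨n, LinearMap.ext fun u => congrArg (fun p => p.2.2) (hz (0, 0, u))⟩⟩
  · right
    have hM : Function.Bijective (Prod.map α (Prod.map α γ)) := by
      have h3 : S.Φ ∘ Prod.map α (Prod.map α γ) = f ∘ S.Φ := funext fun p => (hfΦ p).symm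
      rw [← Function.Bijective.of_comp_iff' S.Φ.bijective, h3]
      exact hb.comp S.Φ.bijective
    have h3 := (Prod.map_bijective.1 hM)
    exact ⟨h3.1, (Prod.map_bijective.1 h3.2).2⟩

theorem exists_adjoint_stabilizes {B : LinearMap.BilinForm k V}
    (hB : ∀ x, (∀ y, B x y = 0) → x = 0) (hI : ∀ j x, x ∈ I j ↔ ∀ y ∈ C j, B x y = 0)
    (hC : ∀ j x, x ∈ C j ↔ ∀ y ∈ I j, B x y = 0) (ω : LinearMap.BilinForm k V)
    (hω : ∀ j, ∀ x ∈ I j, ∀ y ∈ C j, ω x y = 0 ∧ ω y x = 0) :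
    ∃ D : V →ₗ[k] V, Stabilizes I C D ∧ ∀ x y, B (D x) y = ω x y := by
  have hinj : Function.Injective B := (injective_iff_map_eq_zero B).2 fun x hx =>
    hB x fun y => by rw [hx, LinearMap.zero_apply]
  obtain ⟨e, he⟩ : ∃ e : V ≃ₗ[k] Module.Dual k V, ∀ x, e x = B x :=
    ⟨LinearEquiv.ofInjectiveOfFinrankEq B hinj Subspace.dual_finrank_eq.symm, fun _ => rfl⟩
  have hD : ∀ x y, B ((e.symm.toLinearMap ∘ₗ ω) x) y = ω x y := fun x y => by
    rw [← he, LinearMap.comp_apply, LinearEquiv.coe_coe, LinearEquiv.apply_symm_apply]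
  refine ⟨e.symm.toLinearMap ∘ₗ ω, fun j => ⟨fun x hx => (hI j _).2 fun y hy => ?_,
    fun x hx => (hC j _).2 fun y hy => ?_⟩, hD⟩
  · rw [hD, (hω j x hx y hy).1]
  · rw [hD, (hω j y hy x hx).2]

/-- An indecomposable sextuple of even dimension with a compatible symmetric form also has a
compatible alternating form. -/
theorem IndecSextuple.exists_alternating_of_symmetric (h : IndecSextuple I C)
    {B : LinearMap.BilinForm k V} (hB : SymmCompatible B I C) (h2 : (2 : k) ≠ 0)
    (heven : Even (Module.finrank k V)) :
    ∃ ω : LinearMap.BilinForm k V, (∀ x, ω x x = 0) ∧ (∀ x, (∀ y, ω x y = 0) → x = 0) ∧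
      ∀ j, ∀ x ∈ I j, ∀ y ∈ C j, ω x y = 0 := by
  obtain ⟨S⟩ := nonempty_sextupleCoordinates h.le fun i j hij => h.isCompl hB hij
  obtain ⟨θ, hθ, hθΦ⟩ := S.exists_stabilizes h.le (α := S.b ∘ₗ S.a) (γ := S.a ∘ₗ S.b)
    (fun _ => rfl) (fun _ => rfl)
  obtain ⟨ω, hω⟩ : ∃ ω : LinearMap.BilinForm k V, ∀ x y, ω x y = B (θ x) y - B x (θ y) :=
    ⟨B.compl₁₂ θ LinearMap.id - B.compl₁₂ LinearMap.id θ, fun _ _ => rfl⟩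
  have hωIC : ∀ j, ∀ x ∈ I j, ∀ y ∈ C j, ω x y = 0 ∧ ω y x = 0 := fun j x hx y hy => by
    rw [hω, hω, hB.apply_eq_zero ((hθ j).1 x hx) hy, hB.apply_eq_zero hx ((hθ j).2 y hy),
      hB.apply_eq_zero' hy ((hθ j).1 x hx), hB.apply_eq_zero' ((hθ j).2 y hy) hx]
    simp
  obtain ⟨D, hDs, hD⟩ := exists_adjoint_stabilizes hB.eq_zero hB.mem_I hB.mem_C ω hωIC
  rcases h.isNilpotent_or_bijective hDs with hnil | hbij
  · exfalso
    have hβ : ∀ (w x : I 1), B (w : V) x = 0 := fun w x => hB.apply_eq_zero w.2 (h.le 1 x.2)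
    have hψψ : ∀ w x, B (S.ψ w) (S.ψ x) = 0 := fun w x =>
      hB.apply_eq_zero (S.ψ_mem w) (h.le 2 (S.ψ_mem x))
    have h1u : ∀ (w : I 1) (u : ↥(C 1 ⊓ C 2)), B (w : V) u = 0 := fun w u =>
      hB.apply_eq_zero w.2 u.2.1
    have hu1 : ∀ (w : I 1) (u : ↥(C 1 ⊓ C 2)), B u (w : V) = 0 := fun w u =>
      hB.apply_eq_zero' u.2.1 w.2
    have hψu : ∀ (w : I 1) (u : ↥(C 1 ⊓ C 2)), B (S.ψ w) u = 0 := fun w u =>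
      hB.apply_eq_zero (S.ψ_mem w) u.2.2
    have huψ : ∀ (w : I 1) (u : ↥(C 1 ⊓ C 2)), B u (S.ψ w) = 0 := fun w u =>
      hB.apply_eq_zero' u.2.2 (S.ψ_mem w)
    have hθu : ∀ u : ↥(C 1 ⊓ C 2), θ u = S.a (S.b u) := fun u => by
      simpa [S.Φ_apply] using hθΦ (0, 0, u)
    have key := subsingleton_of_skew_relations h2 S.a S.b
      (B.compl₁₂ (I 1).subtype S.ψ) (B.compl₁₂ (C 1 ⊓ C 2).subtype (C 1 ⊓ C 2).subtype)
      (fun u v => hB.symm _ _)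
      (fun u hu => Subtype.ext (hB.eq_zero _ fun y => by
        obtain ⟨p, rfl⟩ := S.Φ.surjective y
        have h3 := hu p.2.2
        simp only [LinearMap.compl₁₂_apply, Submodule.subtype_apply] at h3
        simp only [S.Φ_apply, map_add, hu1, huψ, h3, add_zero]))
      (fun w hw => Subtype.ext (hB.eq_zero _ fun y => by
        obtain ⟨p, rfl⟩ := S.Φ.surjective y
        have h3 := hw p.2.1
        simp only [LinearMap.compl₁₂_apply, Submodule.subtype_apply] at h3
        simp only [S.Φ_apply, map_add, h1u, hβ, h3, add_zero]))
      (fun w u => by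
        have h3 := hB.apply_eq_zero (S.graph_mem w) (S.sub_mem u)
        simp only [S.Φ_apply, map_add, LinearMap.add_apply, map_zero, Submodule.coe_neg, map_neg,
          hβ, h1u, hψu, hu1] at h3
        simp only [LinearMap.compl₁₂_apply, Submodule.subtype_apply]
        rw [hB.symm (S.b u : V)]
        linear_combination h3)
      (fun w x => by
        have h3 := hB.apply_eq_zero (S.graph_mem w) (h.le 0 (S.graph_mem x))
        simp only [S.Φ_apply, map_add, LinearMap.add_apply, hβ, h1u, hψu, hu1, huψ, hψψ] at h3
        simp only [LinearMap.compl₁₂_apply, Submodule.subtype_apply]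
        rw [hB.symm (x : V)]
        linear_combination h3)
      (fun α γ h3 h4 => S.isNilpotent_or_bijective h h3 h4)
      (by
        have h3 := S.Φ.finrank_eq
        rw [Module.finrank_prod, Module.finrank_prod, ← add_assoc] at h3
        rw [← h3, Nat.even_add] at heven
        exact heven.1 ⟨_, rfl⟩)
      (fun hU => by
        have hDU : ∀ x ∈ C 1 ⊓ C 2, D x ∈ C 1 ⊓ C 2 := fun x hx =>
          ⟨(hDs 1).2 x hx.1, (hDs 2).2 x hx.2⟩
        have hnil' : IsNilpotent (D.restrict hDU) := by
          obtain ⟨n, hn⟩ := hnil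
          refine ⟨n, LinearMap.ext fun x => Subtype.ext ?_⟩
          rw [Module.End.pow_restrict]
          exact LinearMap.congr_fun hn x
        have hker : ¬ Function.Injective (D.restrict hDU) := fun hinj =>
          not_subsingleton _ (subsingleton_of_isNilpotent_of_injective hnil' hinj)
        rw [injective_iff_map_eq_zero] at hker
        push Not at hker
        obtain ⟨u, hu, hu0⟩ := hker
        refine ⟨u, hu0, fun v => ?_⟩
        have h3 := hD u v
        have h4 : D u = 0 := congrArg Subtype.val hu
        rw [h4, hω, hθu, hθu, map_zero, LinearMap.zero_apply] at h3
        exact sub_eq_zero.1 h3.symm)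
    obtain ⟨hW, hU⟩ := key
    have := h.nontrivial
    obtain ⟨x, hx⟩ := exists_ne (0 : V)
    obtain ⟨p, rfl⟩ := S.Φ.surjective x
    exact hx (by rw [Subsingleton.elim p 0, map_zero])
  · refine ⟨ω, fun x => ?_, fun x hx => hbij.1 ?_, fun j x hx y hy => (hωIC j x hx y hy).1⟩
    · rw [hω, hB.symm, sub_self]
    · rw [map_zero]
      exact hB.eq_zero _ fun y => by rw [hD, hx]

end Symmetric

section SelfDual

variable {k V : Type*} [Field k] [AddCommGroup V] [Module k V] {I C : ZMod 3 → Submodule k V}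

theorem mem_iff_of_map_eq_dualAnnihilator (g : V ≃ₗ[k] Module.Dual k V)
    {P Q : Submodule k V} (hPQ : Q.map g.toLinearMap = P.dualAnnihilator) (x : V) :
    x ∈ Q ↔ ∀ y ∈ P, g x y = 0 := by
  rw [← Submodule.mem_dualAnnihilator, ← hPQ]
  exact (g.injective.mem_set_image (s := (Q : Set V))).symm

variable [FiniteDimensional k V]

theorem mem_iff_apply_mem_of_injective {f : V →ₗ[k] V} (hf : Function.Injective f)
    {X : Submodule k V} (hX : ∀ x ∈ X, f x ∈ X) (x : V) : x ∈ X ↔ f x ∈ X := by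
  refine ⟨hX x, fun hx => ?_⟩
  have hinj : Function.Injective (f.restrict hX) := fun y z hyz =>
    Subtype.ext (hf (congrArg Subtype.val hyz))
  obtain ⟨y, hy⟩ := LinearMap.injective_iff_surjective.1 hinj ⟨f x, hx⟩
  rw [← hf (congrArg Subtype.val hy)]
  exact y.2

/-- A self-dual indecomposable sextuple of even dimension has a compatible alternating form. -/
theorem IndecSextuple.exists_alternating (h : IndecSextuple I C) (h2 : (2 : k) ≠ 0)
    (b : LinearMap.BilinForm k V) (hb : ∀ x, (∀ y, b x y = 0) → x = 0)
    (hI : ∀ j x, x ∈ I j ↔ ∀ y ∈ C j, b x y = 0) (hC : ∀ j x, x ∈ C j ↔ ∀ y ∈ I j, b x y = 0)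
    (heven : Even (Module.finrank k V)) :
    ∃ ω : LinearMap.BilinForm k V, (∀ x, ω x x = 0) ∧ (∀ x, (∀ y, ω x y = 0) → x = 0) ∧
      ∀ j, ∀ x ∈ I j, ∀ y ∈ C j, ω x y = 0 := by
  obtain ⟨τ, hτs, hτ⟩ := exists_adjoint_stabilizes hb hI hC b.flip fun j x hx y hy =>
    ⟨(hC j y).1 hy x hx, (hI j x).1 hx y hy⟩
  replace hτ : ∀ x y, b (τ x) y = b y x := hτ
  have hsub := (Stabilizes.smul_one (I := I) (C := C) (1 : k)).sub hτs
  have hadd := (Stabilizes.smul_one (I := I) (C := C) (1 : k)).add hτs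
  rcases h.isNilpotent_or_bijective hsub with hnil | hbij
  · have hinj : Function.Injective ((1 : k) • (1 : V →ₗ[k] V) + τ) := by
      have h3 := (bijective_add_smul_one_of_isNilpotent hnil.neg h2).1
      convert h3 using 2
      ext x
      simp
      module
    obtain ⟨B, hB⟩ : ∃ B : LinearMap.BilinForm k V,
        ∀ x y, B x y = b (((1 : k) • (1 : V →ₗ[k] V) + τ) x) y :=
      ⟨b ∘ₗ ((1 : k) • (1 : V →ₗ[k] V) + τ), fun _ _ => rfl⟩
    refine h.exists_alternating_of_symmetric (B := B) ⟨fun x y => ?_, fun x hx => hinj ?_,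
      fun j x => ?_, fun j x => ?_⟩ h2 heven
    · simp [hB, hτ, add_comm]
    · rw [map_zero]
      exact hb _ fun y => by rw [← hB, hx]
    · simp only [hB, ← hI]
      exact mem_iff_apply_mem_of_injective hinj (hadd j).1 x
    · simp only [hB, ← hC]
      exact mem_iff_apply_mem_of_injective hinj (hadd j).2 x
  · refine ⟨b ∘ₗ ((1 : k) • (1 : V →ₗ[k] V) - τ), fun x => ?_, fun x hx => hbij.1 ?_,
      fun j x hx => (hI j _).1 ((hsub j).1 x hx)⟩
    · simp [hτ]
    · rw [map_zero]
      exact hb _ hx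

theorem finrank_add_finrank_of_map_eq_dualAnnihilator (g : V ≃ₗ[k] Module.Dual k V)
    {P Q : Submodule k V} (hPQ : Q.map g.toLinearMap = P.dualAnnihilator) :
    Module.finrank k P + Module.finrank k Q = Module.finrank k V := by
  rw [← Subspace.finrank_add_finrank_dualAnnihilator_eq P, ← hPQ]
  congr 1
  exact (LinearEquiv.finrank_map_eq g Q).symm

theorem map_eq_dualAnnihilator_of_skew {ω : LinearMap.BilinForm k V}
    (hω : ∀ x y, ω x y = -ω y x) (g : V ≃ₗ[k] Module.Dual k V) (hg : ∀ x, g x = ω x)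
    {P Q : Submodule k V} (hPQ : ∀ v, (∀ w ∈ P, ω v w = 0) ↔ v ∈ Q) :
    P.map g.toLinearMap = Q.dualAnnihilator ∧ Q.map g.toLinearMap = P.dualAnnihilator := by
  have h1 : Q.map g.toLinearMap = P.dualAnnihilator := by
    ext φ
    obtain ⟨x, rfl⟩ := g.surjective φ
    rw [Submodule.mem_dualAnnihilator, hg, hPQ, ← hg]
    exact g.injective.mem_set_image (s := (Q : Set V))
  refine ⟨Submodule.eq_of_le_of_finrank_eq ?_ ?_, h1⟩
  · rintro _ ⟨x, hx, rfl⟩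
    refine (Submodule.mem_dualAnnihilator _).2 fun y hy => ?_
    rw [LinearEquiv.coe_coe, hg, hω, (hPQ y).2 hy x hx, neg_zero]
  · have h3 := finrank_add_finrank_of_map_eq_dualAnnihilator g h1
    have h4 := Subspace.finrank_add_finrank_dualAnnihilator_eq Q
    have h5 : Module.finrank k (P.map g.toLinearMap) = Module.finrank k P :=
      LinearEquiv.finrank_map_eq g P
    omega

theorem orthogonal_iff_mem_of_finrank_add {ω : LinearMap.BilinForm k V} (hnd : ω.Nondegenerate)
    (hω : ∀ x y, ω x y = -ω y x) {P Q : Submodule k V} (hPQ : ∀ x ∈ P, ∀ y ∈ Q, ω x y = 0)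
    (hfin : Module.finrank k P + Module.finrank k Q = Module.finrank k V) (v : V) :
    (∀ w ∈ P, ω v w = 0) ↔ v ∈ Q := by
  have hQ : Q = ω.orthogonal P := by
    refine Submodule.eq_of_le_of_finrank_eq (fun y hy x hx => hPQ x hx y hy) ?_
    rw [LinearMap.BilinForm.finrank_orthogonal hnd]
    omega
  rw [hQ, LinearMap.BilinForm.mem_orthogonal_iff]
  refine forall₂_congr fun w _ => ?_
  rw [hω, neg_eq_zero]

end SelfDual

/-- Let `k` be a perfect field of characteristic `≠ 2` and
`(I₁, C₁, I₂, C₂, I₃, C₃)` an indecomposable sextuple in a finite-dimensional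
`k`-vector space `V`.  The following are equivalent: (1) there is a nondegenerate
alternating bilinear form `ω` on `V` whose orthogonal of `Iᵢ` equals `Cᵢ` for each `i`
(i.e. the sextuple underlies an isotropic triple); (2) the sextuple is self-dual and
`dim V` is even. -/
theorem indecomposable_sextuple_symplectic_iff_selfdual_even
    {k V : Type*} [Field k] [PerfectField k] (h2 : (2 : k) ≠ 0)
    [AddCommGroup V] [Module k V] [FiniteDimensional k V] [Nontrivial V]
    (I1 C1 I2 C2 I3 C3 : Submodule k V)
    (h1 : I1 ≤ C1) (h2' : I2 ≤ C2) (h3 : I3 ≤ C3)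
    (hindec : ∀ U' U'' : Submodule k V, IsCompl U' U'' →
      (∀ X ∈ ([I1, C1, I2, C2, I3, C3] : List (Submodule k V)),
        X = (X ⊓ U') ⊔ (X ⊓ U'')) →
      U' = ⊥ ∨ U'' = ⊥) :
    (∃ ω : LinearMap.BilinForm k V, LinearMap.BilinForm.Nondegenerate ω ∧
        LinearMap.IsAlt ω ∧
        (∀ v : V, (∀ w ∈ I1, ω v w = 0) ↔ v ∈ C1) ∧
        (∀ v : V, (∀ w ∈ I2, ω v w = 0) ↔ v ∈ C2) ∧
        (∀ v : V, (∀ w ∈ I3, ω v w = 0) ↔ v ∈ C3))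
    ↔ ((∃ g : V ≃ₗ[k] Module.Dual k V,
          I1.map g.toLinearMap = C1.dualAnnihilator ∧
          C1.map g.toLinearMap = I1.dualAnnihilator ∧
          I2.map g.toLinearMap = C2.dualAnnihilator ∧
          C2.map g.toLinearMap = I2.dualAnnihilator ∧
          I3.map g.toLinearMap = C3.dualAnnihilator ∧
          C3.map g.toLinearMap = I3.dualAnnihilator) ∧
        Even (Module.finrank k V)) := by
  have hcases : ∀ {p : ZMod 3 → Prop}, p 0 → p 1 → p 2 → ∀ j, p j := fun {p} h0 h1 h2 j => by
    rcases (by decide : ∀ j : ZMod 3, j = 0 ∨ j = 1 ∨ j = 2) j with rfl | rfl | rfl <;> assumption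
  constructor
  · rintro ⟨ω, hnd, halt, hC1, hC2, hC3⟩
    have hskew : ∀ x y, ω x y = -ω y x := fun x y => (halt.neg y x).symm
    have hinj : Function.Injective ω := (injective_iff_map_eq_zero ω).2 fun x hx =>
      hnd.1 x fun y => by rw [hx, LinearMap.zero_apply]
    obtain ⟨g, hg⟩ : ∃ g : V ≃ₗ[k] Module.Dual k V, ∀ x, g x = ω x :=
      ⟨LinearEquiv.ofInjectiveOfFinrankEq ω hinj Subspace.dual_finrank_eq.symm, fun _ => rfl⟩
    have hm1 := map_eq_dualAnnihilator_of_skew hskew g hg hC1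
    have hm2 := map_eq_dualAnnihilator_of_skew hskew g hg hC2
    have hm3 := map_eq_dualAnnihilator_of_skew hskew g hg hC3
    exact ⟨⟨g, hm1.1, hm1.2, hm2.1, hm2.2, hm3.1, hm3.2⟩,
      even_finrank_of_skew h2 ω hskew fun x hx => hnd.1 x hx⟩
  · rintro ⟨⟨g, hI1, hC1, hI2, hC2, hI3, hC3⟩, heven⟩
    have hsext : IndecSextuple (k := k) ![I3, I1, I2] ![C3, C1, C2] := by
      refine ⟨inferInstance, hcases h3 h1 h2', fun A B hAB hI hC => hindec A B hAB fun X hX =>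
        le_antisymm ?_ (sup_le inf_le_left inf_le_left)⟩
      simp only [List.mem_cons, List.not_mem_nil, or_false] at hX
      rcases hX with rfl | rfl | rfl | rfl | rfl | rfl
      exacts [hI 1, hC 1, hI 2, hC 2, hI 0, hC 0]
    obtain ⟨ω, halt, hnd, hω⟩ := hsext.exists_alternating h2 g.toLinearMap
      (fun x hx => g.injective (by rw [map_zero]; exact LinearMap.ext hx))
      (hcases (mem_iff_of_map_eq_dualAnnihilator g hI3) (mem_iff_of_map_eq_dualAnnihilator g hI1)
        (mem_iff_of_map_eq_dualAnnihilator g hI2))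
      (hcases (mem_iff_of_map_eq_dualAnnihilator g hC3) (mem_iff_of_map_eq_dualAnnihilator g hC1)
        (mem_iff_of_map_eq_dualAnnihilator g hC2)) heven
    have hAlt : LinearMap.IsAlt ω := halt
    have hskew : ∀ x y, ω x y = -ω y x := fun x y => (hAlt.neg y x).symm
    have hnd' : ω.Nondegenerate := .ofSeparatingLeft hnd
    exact ⟨ω, hnd', hAlt,
      orthogonal_iff_mem_of_finrank_add hnd' hskew (hω 1)
        (finrank_add_finrank_of_map_eq_dualAnnihilator g hC1),
      orthogonal_iff_mem_of_finrank_add hnd' hskew (hω 2)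
        (finrank_add_finrank_of_map_eq_dualAnnihilator g hC2),
      orthogonal_iff_mem_of_finrank_add hnd' hskew (hω 0)
        (finrank_add_finrank_of_map_eq_dualAnnihilator g hC3)⟩
end
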